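/- arXiv:1812.09498 — 8 statements merged into one kernel-verified Lean document; each statement's English description precedes it below -/
import Mathlib

section
/- Let u ∈ C²([a,b]) be a solution of the straight BVP. Then u is strictly increasing and convex on [a,b]; more precisely, u'(x) > 0 for every x ∈ [a,b] and u''(x) ≥ 0 for every x ∈ [a,b]. -/
open Set Filter

noncomputable section

/-- Partial derivative of a two-argument function with respect to its first argument. -/
def pd1 (f : ℝ → ℝ → ℝ) (u x : ℝ) : ℝ := deriv (fun t => f t x) u

/-- Partial derivative of a two-argument function with respect to its second argument. -/
def pd2 (f : ℝ → ℝ → ℝ) (u x : ℝ) : ℝ := deriv (fun s => f u s) x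

/-- The nonlinearity `𝒩(u,x) = N(u,x)·u`. -/
def Ncal (N : ℝ → ℝ → ℝ) (u x : ℝ) : ℝ := N u x * u

/-- `u` is twice continuously differentiable on `s`, with first derivative `u'`
and second derivative `u''` (derivatives within `s`). -/
def IsC2On (u u' u'' : ℝ → ℝ) (s : Set ℝ) : Prop :=
  (∀ x ∈ s, HasDerivWithinAt u (u' x) s x) ∧
  (∀ x ∈ s, HasDerivWithinAt u' (u'' x) s x) ∧
  ContinuousOn u'' s

/-- The straight boundary value problem: `u ∈ C²([a,b])`, `u'' = 𝒩(u(x),x)` on `[a,b]`,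
`u(a) = 0`, `u(b) = ub`. -/
def IsStraightBVP (N : ℝ → ℝ → ℝ) (a b ub : ℝ) (u u' u'' : ℝ → ℝ) : Prop :=
  IsC2On u u' u'' (Icc a b) ∧
  (∀ x ∈ Icc a b, u'' x = Ncal N (u x) x) ∧
  u a = 0 ∧ u b = ub

/-- A function whose derivative within `[a, b]` is nonnegative is monotone on `[a, b]`. -/
lemma monotoneOn_Icc_of_hasDerivWithinAt_nonneg {a b : ℝ} {f f' : ℝ → ℝ}
    (hf : ∀ x ∈ Icc a b, HasDerivWithinAt f (f' x) (Icc a b) x)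
    (hf' : ∀ x ∈ Icc a b, 0 ≤ f' x) : MonotoneOn f (Icc a b) :=
  monotoneOn_of_hasDerivWithinAt_nonneg (convex_Icc a b)
    (fun x hx => (hf x hx).continuousWithinAt)
    (fun x hx => (hf x (interior_subset hx)).mono interior_subset)
    (fun x hx => hf' x (interior_subset hx))

/-- If `f' ≤ L f` on `[a, b]` and `f a ≤ 0`, then `f ≤ 0` on `[a, b]`. -/
lemma nonpos_of_hasDerivWithinAt_le_mul {a b L : ℝ} {f f' : ℝ → ℝ}
    (hf : ∀ x ∈ Icc a b, HasDerivWithinAt f (f' x) (Icc a b) x)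
    (hle : ∀ x ∈ Icc a b, f' x ≤ L * f x) (ha : f a ≤ 0) {x : ℝ} (hx : x ∈ Icc a b) :
    f x ≤ 0 := by
  have hder : ∀ y ∈ Icc a b, HasDerivWithinAt (fun z => -(f z * Real.exp (-L * z)))
      ((L * f y - f' y) * Real.exp (-L * y)) (Icc a b) y := by
    intro y hy
    have he : HasDerivAt (fun z => Real.exp (-L * z)) (Real.exp (-L * y) * (-L * 1)) y :=
      ((hasDerivAt_id y).const_mul (-L)).exp
    exact ((hf y hy).mul he.hasDerivWithinAt).neg.congr_deriv (by ring)
  have hmono := monotoneOn_Icc_of_hasDerivWithinAt_nonneg hder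
    (fun y hy => mul_nonneg (sub_nonneg.2 (hle y hy)) (Real.exp_pos _).le)
  have h := hmono (left_mem_Icc.2 (hx.1.trans hx.2)) hx hx.1
  have h0 : f a * Real.exp (-L * a) ≤ 0 :=
    mul_nonpos_of_nonpos_of_nonneg ha (Real.exp_pos _).le
  exact nonpos_of_mul_nonpos_left (by linarith) (Real.exp_pos (-L * x))

/-- If `𝒩(·, x)` has nonnegative derivative, then `𝒩(t, x)` has the sign of `t`. -/
lemma mul_Ncal_nonneg {N : ℝ → ℝ → ℝ} (hN : ContDiff ℝ 1 (Function.uncurry N)) {x : ℝ}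
    (hx : ∀ t, 0 ≤ pd1 (Ncal N) t x) (t : ℝ) : 0 ≤ t * Ncal N t x := by
  have hd : Differentiable ℝ (fun t => Ncal N t x) := by
    have h1 : Differentiable ℝ (fun t => Function.uncurry N (t, x)) :=
      (hN.differentiable one_ne_zero).comp (differentiable_id.prodMk (differentiable_const x))
    exact h1.mul differentiable_id
  have hm : Monotone (fun t => Ncal N t x) := monotone_of_deriv_nonneg hd hx
  have h0 : Ncal N 0 x = 0 := mul_zero _
  rcases le_total 0 t with ht | ht
  · exact mul_nonneg ht (h0 ▸ hm ht)
  · exact mul_nonneg_of_nonpos_of_nonpos ht (h0 ▸ hm ht)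

/-- If `u u'' ≥ 0` on `[a, b]`, `u a = 0` and `0 < u b`, then `u ≥ 0` on `[a, b]`. -/
lemma IsC2On.nonneg_of_mul_nonneg {a b : ℝ} {u u' u'' : ℝ → ℝ}
    (hu : IsC2On u u' u'' (Icc a b)) (hmul : ∀ x ∈ Icc a b, 0 ≤ u x * u'' x)
    (ha : u a = 0) (hb : 0 < u b) : ∀ x ∈ Icc a b, 0 ≤ u x := by
  obtain ⟨h1, h2, -⟩ := hu
  have hprod : MonotoneOn (fun x => u x * u' x) (Icc a b) :=
    monotoneOn_Icc_of_hasDerivWithinAt_nonneg (fun x hx => (h1 x hx).mul (h2 x hx))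
      (fun x hx => add_nonneg (mul_self_nonneg _) (hmul x hx))
  have hsq : MonotoneOn (fun x => u x * u x) (Icc a b) := by
    refine monotoneOn_Icc_of_hasDerivWithinAt_nonneg (fun x hx => (h1 x hx).mul (h1 x hx)) ?_
    intro x hx
    have h := hprod (left_mem_Icc.2 (hx.1.trans hx.2)) hx hx.1
    simp only [ha, zero_mul] at h
    linarith [mul_comm (u x) (u' x)]
  intro x hx
  by_contra! hneg
  have hcont : ContinuousOn u (Icc x b) := fun y hy =>
    (h1 y ⟨hx.1.trans hy.1, hy.2⟩).continuousWithinAt.mono (Icc_subset_Icc_left hx.1)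
  obtain ⟨z, hz, hz0⟩ := intermediate_value_Icc hx.2 hcont ⟨hneg.le, hb.le⟩
  have h := hsq hx ⟨hx.1.trans hz.1, hz.2⟩ hz.1
  simp only [hz0, mul_zero] at h
  exact absurd h (not_le.2 (mul_pos_of_neg_of_neg hneg hneg))

/-- A nonnegative `u` with `u'' ≤ K u` on `[a, b]`, `u a = 0` and `0 < u b` has `0 < u' a`. -/
lemma IsC2On.deriv_left_pos {a b K : ℝ} {u u' u'' : ℝ → ℝ} (hab : a ≤ b)
    (hu : IsC2On u u' u'' (Icc a b)) (hnonneg : ∀ x ∈ Icc a b, 0 ≤ u x)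
    (hle : ∀ x ∈ Icc a b, u'' x ≤ K * u x) (ha : u a = 0) (hb : 0 < u b) : 0 < u' a := by
  obtain ⟨h1, h2, -⟩ := hu
  by_contra! hneg
  set L : ℝ := |K| + 1
  have hKL : K ≤ L * L := by nlinarith [le_abs_self K, abs_nonneg K]
  have hsum : ∀ x ∈ Icc a b, u' x + L * u x ≤ 0 := fun x hx =>
    nonpos_of_hasDerivWithinAt_le_mul (L := L) (f := fun x => u' x + L * u x)
      (fun y hy => (h2 y hy).add ((h1 y hy).const_mul L))
      (fun y hy => by
        have := mul_le_mul_of_nonneg_right hKL (hnonneg y hy)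
        linarith [hle y hy])
      (by simpa [ha] using hneg) hx
  exact absurd (nonpos_of_hasDerivWithinAt_le_mul (L := -L) h1
    (fun x hx => by linarith [hsum x hx]) ha.le (right_mem_Icc.2 hab)) (not_le.2 hb)

/-- a solution of the straight BVP is strictly increasing and convex on `[a,b]`;
more precisely `u' > 0` and `u'' ≥ 0` on `[a,b]`. -/
theorem straightBVP_strictMono_convex
    (a b ub : ℝ) (hab : a < b) (hub : 0 < ub)
    (N : ℝ → ℝ → ℝ) (hN : ContDiff ℝ 1 (Function.uncurry N))
    (hC1 : ∀ t : ℝ, ∀ x ∈ Icc a b, 0 ≤ pd1 (Ncal N) t x)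
    (hC2 : ∀ t : ℝ, 0 ≤ t → ∀ x ∈ Icc a b, 0 ≤ N t x)
    (u u' u'' : ℝ → ℝ)
    (hu : IsStraightBVP N a b ub u u' u'') :
    StrictMonoOn u (Icc a b) ∧ ConvexOn ℝ (Icc a b) u ∧
      (∀ x ∈ Icc a b, 0 < u' x) ∧ (∀ x ∈ Icc a b, 0 ≤ u'' x) := by
  obtain ⟨hC2u, heq, hua, hubb⟩ := hu
  have hb : 0 < u b := hubb ▸ hub
  have hnonneg : ∀ x ∈ Icc a b, 0 ≤ u x := hC2u.nonneg_of_mul_nonneg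
    (fun x hx => heq x hx ▸ mul_Ncal_nonneg hN (fun t => hC1 t x hx) (u x)) hua hb
  obtain ⟨h1, h2, -⟩ := id hC2u
  have hcont : ContinuousOn u (Icc a b) := fun x hx => (h1 x hx).continuousWithinAt
  have hpp : ∀ x ∈ Icc a b, 0 ≤ u'' x := fun x hx =>
    heq x hx ▸ mul_nonneg (hC2 _ (hnonneg x hx) x hx) (hnonneg x hx)
  have hNcont : ContinuousOn (fun x => Function.uncurry N (u x, x)) (Icc a b) :=
    hN.continuous.comp_continuousOn (hcont.prodMk continuousOn_id)
  obtain ⟨K, hK⟩ := isCompact_Icc.bddAbove_image hNcont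
  have hleft : 0 < u' a := hC2u.deriv_left_pos (K := K) hab.le hnonneg
    (fun x hx => heq x hx ▸ mul_le_mul_of_nonneg_right (hK (mem_image_of_mem _ hx))
      (hnonneg x hx)) hua hb
  have hp : ∀ x ∈ Icc a b, 0 < u' x := fun x hx => hleft.trans_le
    (monotoneOn_Icc_of_hasDerivWithinAt_nonneg h2 hpp (left_mem_Icc.2 hab.le) hx hx.1)
  refine ⟨?_, ?_, hp, hpp⟩
  · exact strictMonoOn_of_hasDerivWithinAt_pos (convex_Icc a b) hcont
      (fun x hx => (h1 x (interior_subset hx)).mono interior_subset)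
      (fun x hx => hp x (interior_subset hx))
  · exact convexOn_of_hasDerivWithinAt2_nonneg (convex_Icc a b) hcont
      (fun x hx => (h1 x (interior_subset hx)).mono interior_subset)
      (fun x hx => (h2 x (interior_subset hx)).mono interior_subset)
      (fun x hx => hpp x (interior_subset hx))
end
end

section
/- Let u ∈ C²([a,b]) be a solution of the straight BVP. Then u(x) > 0 for every x ∈ (a,b] and u'(a) > 0. -/
open Set Filter

noncomputable section

theorem Ncal_mul_self_nonneg {N : ℝ → ℝ → ℝ} (hN : ContDiff ℝ 1 (Function.uncurry N)) {x : ℝ}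
    (hC1 : ∀ t : ℝ, 0 ≤ pd1 (Ncal N) t x) (t : ℝ) : 0 ≤ Ncal N t x * t := by
  have hd : Differentiable ℝ fun t => Ncal N t x := by
    have h : Differentiable ℝ fun t => Function.uncurry N (t, x) :=
      (hN.differentiable one_ne_zero).comp (differentiable_id.prodMk (differentiable_const x))
    exact h.mul differentiable_id
  have hm : Monotone fun t => Ncal N t x := monotone_of_deriv_nonneg hd hC1
  have h0 : Ncal N 0 x = 0 := mul_zero _
  rcases le_total 0 t with ht | ht
  · exact mul_nonneg (h0 ▸ hm ht) ht
  · exact mul_nonneg_of_nonpos_of_nonpos (h0 ▸ hm ht) ht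

/-- If `u u'' ≥ 0` on `[a,b]` and `u(a) = 0`, then `u²` is nondecreasing. -/
theorem IsC2On.monotoneOn_sq {a b : ℝ} {u u' u'' : ℝ → ℝ} (h : IsC2On u u' u'' (Icc a b))
    (hconv : ∀ x ∈ Icc a b, 0 ≤ u'' x * u x) (ha : u a = 0) :
    MonotoneOn (fun x => u x ^ 2) (Icc a b) := by
  obtain ⟨h1, h2, -⟩ := h
  have hprod : ∀ x ∈ Icc a b,
      HasDerivWithinAt (fun x => u x * u' x) (u' x * u' x + u x * u'' x) (Icc a b) x :=
    fun x hx => (h1 x hx).mul (h2 x hx)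
  have hprod_mono : MonotoneOn (fun x => u x * u' x) (Icc a b) := by
    refine monotoneOn_of_hasDerivWithinAt_nonneg (convex_Icc a b)
      (fun x hx => (hprod x hx).continuousWithinAt)
      (fun x hx => (hprod x (interior_subset hx)).mono interior_subset) fun x hx => ?_
    nlinarith [hconv x (interior_subset hx), mul_self_nonneg (u' x)]
  have hsq : ∀ x ∈ Icc a b,
      HasDerivWithinAt (fun x => u x ^ 2) (2 * (u x * u' x)) (Icc a b) x := fun x hx =>
    ((h1 x hx).pow 2).congr_deriv (by ring)
  refine monotoneOn_of_hasDerivWithinAt_nonneg (convex_Icc a b)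
    (fun x hx => (hsq x hx).continuousWithinAt)
    (fun x hx => (hsq x (interior_subset hx)).mono interior_subset) fun x hx => ?_
  have hx' := interior_subset hx
  have := hprod_mono (left_mem_Icc.2 (hx'.1.trans hx'.2)) hx' hx'.1
  simp only [ha, zero_mul] at this
  positivity

/-- A solution of `u'' = q u` with bounded `q` and zero Cauchy data at `a` vanishes on `[a,b]`. -/
theorem IsC2On.eq_zero_of_left {a b K : ℝ} {u u' u'' q : ℝ → ℝ} (h : IsC2On u u' u'' (Icc a b))
    (hq : ∀ x ∈ Icc a b, |q x| ≤ K) (hode : ∀ x ∈ Icc a b, u'' x = q x * u x)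
    (ha : u a = 0) (ha' : u' a = 0) {x : ℝ} (hx : x ∈ Icc a b) : u x = 0 := by
  obtain ⟨h1, h2, -⟩ := h
  have hE : ∀ x ∈ Icc a b,
      HasDerivWithinAt (fun x => (u x ^ 2 + u' x ^ 2) * Real.exp (-(1 + K) * x))
        ((2 * u x * u' x + 2 * u' x * u'' x - (1 + K) * (u x ^ 2 + u' x ^ 2)) *
          Real.exp (-(1 + K) * x)) (Icc a b) x := fun x hx => by
    have hexp : HasDerivWithinAt (fun x => Real.exp (-(1 + K) * x))
        (Real.exp (-(1 + K) * x) * (-(1 + K) * 1)) (Icc a b) x :=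
      ((hasDerivWithinAt_id x _).const_mul _).exp
    refine ((((h1 x hx).pow 2).add ((h2 x hx).pow 2)).mul hexp).congr_deriv ?_
    simp only [Pi.add_apply, Pi.pow_apply]
    ring
  have hanti : AntitoneOn (fun x => (u x ^ 2 + u' x ^ 2) * Real.exp (-(1 + K) * x)) (Icc a b) := by
    refine antitoneOn_of_hasDerivWithinAt_nonpos (convex_Icc a b)
      (fun x hx => (hE x hx).continuousWithinAt)
      (fun x hx => (hE x (interior_subset hx)).mono interior_subset) fun x hx => ?_
    have hx' := interior_subset hx
    refine mul_nonpos_of_nonpos_of_nonneg ?_ (Real.exp_pos _).le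
    rw [hode x hx']
    obtain ⟨hl, hr⟩ := abs_le.1 (hq x hx')
    nlinarith [mul_nonneg (sub_nonneg.2 hr) (sq_nonneg (u x + u' x)),
      mul_nonneg (neg_le_iff_add_nonneg.1 hl) (sq_nonneg (u x - u' x)), sq_nonneg (u x - u' x)]
  have hle := hanti (left_mem_Icc.2 (hx.1.trans hx.2)) hx hx.1
  simp only [ha, ha'] at hle
  have hsum : u x ^ 2 + u' x ^ 2 ≤ 0 :=
    nonpos_of_mul_nonpos_left (by simpa using hle) (Real.exp_pos _)
  exact pow_eq_zero_iff two_ne_zero |>.1 (by nlinarith [sq_nonneg (u x), sq_nonneg (u' x)])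

/-- a solution of the straight BVP satisfies `u(x) > 0` on `(a,b]`
and `u'(a) > 0`. -/
theorem straightBVP_pos_and_deriv_pos_at_left
    (a b ub : ℝ) (hab : a < b) (hub : 0 < ub)
    (N : ℝ → ℝ → ℝ) (hN : ContDiff ℝ 1 (Function.uncurry N))
    (hC1 : ∀ t : ℝ, ∀ x ∈ Icc a b, 0 ≤ pd1 (Ncal N) t x)
    (hC2 : ∀ t : ℝ, 0 ≤ t → ∀ x ∈ Icc a b, 0 ≤ N t x)
    (u u' u'' : ℝ → ℝ)
    (hu : IsStraightBVP N a b ub u u' u'') :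
    (∀ x ∈ Ioc a b, 0 < u x) ∧ 0 < u' a := by
  obtain ⟨hC2On, hode, ha, hb⟩ := hu
  have hcont : ContinuousOn u (Icc a b) := fun x hx => (hC2On.1 x hx).continuousWithinAt
  have ha_mem : a ∈ Icc a b := left_mem_Icc.2 hab.le
  have hb_mem : b ∈ Icc a b := right_mem_Icc.2 hab.le
  have hsq : MonotoneOn (fun x => u x ^ 2) (Icc a b) :=
    hC2On.monotoneOn_sq
      (fun x hx => hode x hx ▸ Ncal_mul_self_nonneg hN (fun t => hC1 t x hx) (u x)) ha
  have hderiv_ne : u' a ≠ 0 := fun ha' => by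
    have hq : ContinuousOn (fun x => Function.uncurry N (u x, x)) (Icc a b) :=
      hN.continuous.comp_continuousOn (hcont.prodMk continuousOn_id)
    obtain ⟨K, hK⟩ := isCompact_Icc.exists_bound_of_continuousOn hq
    exact hub.ne' (hb ▸ hC2On.eq_zero_of_left hK hode ha ha' hb_mem)
  have hne : ∀ x ∈ Ioc a b, u x ≠ 0 := fun x hx hux => by
    have hsub : Icc a x ⊆ Icc a b := Icc_subset_Icc_right hx.2
    have hzero : ∀ y ∈ Icc a x, u y = 0 := fun y hy => by
      have := hsq (hsub hy) (Ioc_subset_Icc_self hx) hy.2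
      simp only [hux] at this
      exact pow_eq_zero_iff two_ne_zero |>.1 (by nlinarith [sq_nonneg (u y)])
    have hd : HasDerivWithinAt u 0 (Icc a x) a :=
      (hasDerivWithinAt_const a _ (0 : ℝ)).congr hzero ha
    exact hderiv_ne ((uniqueDiffOn_Icc hx.1 a (left_mem_Icc.2 hx.1.le)).eq_deriv _
      ((hC2On.1 a ha_mem).mono hsub) hd)
  have hpos : ∀ x ∈ Ioc a b, 0 < u x := fun x hx => by
    by_contra! hux
    obtain ⟨y, hy, huy⟩ := intermediate_value_Icc hx.2
      (hcont.mono (Icc_subset_Icc_left hx.1.le)) ⟨hux, hb ▸ hub.le⟩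
    exact hne y ⟨hx.1.trans_le hy.1, hy.2⟩ huy
  have hnonneg : ∀ x ∈ Icc a b, 0 ≤ u x := fun x hx => by
    rcases hx.1.eq_or_lt with rfl | hax
    · exact ha.ge
    · exact (hpos x ⟨hax, hx.2⟩).le
  have hmono : MonotoneOn u (Icc a b) := fun x hx y hy hxy =>
    le_of_sq_le_sq (hsq hx hy hxy) (hnonneg y hy)
  have hderiv_nonneg : 0 ≤ u' a :=
    (hC2On.1 a ha_mem).derivWithin (uniqueDiffOn_Icc hab a ha_mem) ▸ hmono.derivWithin_nonneg
  exact ⟨hpos, hderiv_nonneg.lt_of_ne' hderiv_ne⟩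
end
end

section
/- Let x* ∈ C²([0,u_b]) satisfy x*''(u) = −𝒩(u, x*(u))·(x*'(u))³ for all u ∈ [0,u_b]. Then 1 + 2·x*'(0)²·∫₀^η 𝒩(ξ, x*(ξ)) dξ > 0 for every η ∈ [0,u_b], and for every u ∈ [0,u_b] one has the representation x*(u) = x*(0) + ∫₀^u x*'(0) / √(1 + 2·x*'(0)²·∫₀^η 𝒩(ξ, x*(ξ)) dξ) dη. -/
open Set Filter

noncomputable section

/-- A function with zero derivative within `[a, b]` is constant there. -/
theorem eq_left_of_hasDerivWithinAt_zero {f : ℝ → ℝ} {a b : ℝ}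
    (hf : ∀ x ∈ Icc a b, HasDerivWithinAt f 0 (Icc a b) x) {x : ℝ} (hx : x ∈ Icc a b) :
    f x = f a := by
  refine constant_of_has_deriv_right_zero (fun y hy => (hf y hy).continuousWithinAt) ?_ x hx
  intro y hy
  exact (hf y (Ico_subset_Icc_self hy)).mono_of_mem_nhdsWithin (Icc_mem_nhdsGE_of_mem hy)

/-- A solution of the Bernoulli equation `v' = -g v³` on `[0, b]` is determined, up to a positive
factor `exp (-F u)`, by its initial value, and that factor is the inverse square root of
`1 + 2 v(0)² ∫₀ᵘ g`. -/
theorem exists_exp_of_bernoulli_cubic {v g : ℝ → ℝ} {b : ℝ} (hb : 0 ≤ b)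
    (hg : ContinuousOn g (Icc 0 b))
    (hv : ∀ u ∈ Icc 0 b, HasDerivWithinAt v (-g u * v u ^ 3) (Icc 0 b) u) :
    ∃ F : ℝ → ℝ, ∀ u ∈ Icc 0 b, v u * Real.exp (F u) = v 0 ∧
      1 + 2 * v 0 ^ 2 * ∫ ξ in (0:ℝ)..u, g ξ = Real.exp (F u) ^ 2 := by
  have hvc : ContinuousOn v (Icc 0 b) := fun u hu => (hv u hu).continuousWithinAt
  set G : ℝ → ℝ := IccExtend hb ((Icc 0 b).domRestrict g) with hGdef
  set H : ℝ → ℝ := IccExtend hb ((Icc 0 b).domRestrict fun u => g u * v u ^ 2) with hHdef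
  have hG : Continuous G := hg.domRestrict.Icc_extend'
  have hH : Continuous H := (hg.mul (hvc.pow 2)).domRestrict.Icc_extend'
  have hGg : ∀ u ∈ Icc 0 b, G u = g u := fun u hu => by
    simp [hGdef, IccExtend_of_mem hb _ hu]
  have hHg : ∀ u ∈ Icc 0 b, H u = g u * v u ^ 2 := fun u hu => by
    simp [hHdef, IccExtend_of_mem hb _ hu]
  set F : ℝ → ℝ := fun u => ∫ ξ in (0:ℝ)..u, H ξ with hFdef
  have hF0 : F 0 = 0 := by simp [hFdef]
  have hF : ∀ u, HasDerivAt F (H u) u := fun u => hH.integral_hasStrictDerivAt 0 u |>.hasDerivAt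
  have hlin : ∀ u ∈ Icc 0 b, v u * Real.exp (F u) = v 0 := by
    intro u hu
    have := eq_left_of_hasDerivWithinAt_zero (f := fun u => v u * Real.exp (F u)) (a := 0) (b := b)
      (fun y hy => ((hv y hy).mul (hF y).exp.hasDerivWithinAt).congr_deriv
        (by rw [hHg y hy]; ring)) hu
    simpa [hF0] using this
  refine ⟨F, fun u hu => ⟨hlin u hu, ?_⟩⟩
  have hint : ∫ ξ in (0:ℝ)..u, g ξ = ∫ ξ in (0:ℝ)..u, G ξ := by
    refine intervalIntegral.integral_congr fun ξ hξ => ?_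
    rw [uIcc_of_le hu.1] at hξ
    exact (hGg ξ ⟨hξ.1, hξ.2.trans hu.2⟩).symm
  have hconst := eq_left_of_hasDerivWithinAt_zero
    (f := fun u => Real.exp (F u) ^ 2 - 2 * v 0 ^ 2 * ∫ ξ in (0:ℝ)..u, G ξ) (a := 0) (b := b)
    (fun y hy => ((((hF y).exp.pow 2).sub
      ((hG.integral_hasStrictDerivAt 0 y).hasDerivAt.const_mul (2 * v 0 ^ 2))).congr_deriv
        (by rw [hHg y hy, hGg y hy, ← hlin y hy]; push_cast; ring)).hasDerivWithinAt) hu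
  simp only [hF0, Real.exp_zero, intervalIntegral.integral_same] at hconst
  rw [hint]
  linarith

/-- the Bernoulli-type integral representation of a solution of the
inverse equation `x*'' = −𝒩(u, x*(u))·(x*'(u))³` on `[0, u_b]`. -/
theorem inverse_equation_integral_representation
    (ub : ℝ) (hub : 0 < ub)
    (N : ℝ → ℝ → ℝ) (hN : ContDiff ℝ 1 (Function.uncurry N))
    (xs xs' xs'' : ℝ → ℝ)
    (hx : IsC2On xs xs' xs'' (Icc 0 ub))
    (hode : ∀ u ∈ Icc (0:ℝ) ub, xs'' u = -(Ncal N u (xs u)) * (xs' u) ^ 3) :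
    (∀ η ∈ Icc (0:ℝ) ub,
      0 < 1 + 2 * (xs' 0) ^ 2 * ∫ ξ in (0:ℝ)..η, Ncal N ξ (xs ξ)) ∧
    (∀ u ∈ Icc (0:ℝ) ub,
      xs u = xs 0 + ∫ η in (0:ℝ)..u,
        xs' 0 / Real.sqrt (1 + 2 * (xs' 0) ^ 2 * ∫ ξ in (0:ℝ)..η, Ncal N ξ (xs ξ))) := by
  obtain ⟨hx1, hx2, -⟩ := hx
  have hxc : ContinuousOn xs (Icc 0 ub) := fun u hu => (hx1 u hu).continuousWithinAt
  have hvc : ContinuousOn xs' (Icc 0 ub) := fun u hu => (hx2 u hu).continuousWithinAt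
  have hg : ContinuousOn (fun u => Ncal N u (xs u)) (Icc 0 ub) :=
    (hN.continuous.comp_continuousOn (continuousOn_id.prodMk hxc)).mul continuousOn_id
  obtain ⟨F, hF⟩ := exists_exp_of_bernoulli_cubic hub.le hg
    (fun u hu => (hx2 u hu).congr_deriv (hode u hu))
  refine ⟨fun η hη => by rw [(hF η hη).2]; positivity, fun u hu => ?_⟩
  have hsub : Icc 0 u ⊆ Icc 0 ub := Icc_subset_Icc_right hu.2
  have hint : ∫ η in (0:ℝ)..u,
      xs' 0 / Real.sqrt (1 + 2 * (xs' 0) ^ 2 * ∫ ξ in (0:ℝ)..η, Ncal N ξ (xs ξ)) =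
      ∫ η in (0:ℝ)..u, xs' η := by
    refine intervalIntegral.integral_congr fun η hη => ?_
    rw [uIcc_of_le hu.1] at hη
    obtain ⟨h1, h2⟩ := hF η (hsub hη)
    simp only [h2, Real.sqrt_sq (Real.exp_pos _).le]
    rw [← h1, mul_div_cancel_right₀ _ (Real.exp_pos _).ne']
  rw [hint, intervalIntegral.integral_eq_sub_of_hasDerivAt_of_le hu.1 (hxc.mono hsub)
    (fun y hy => (hx1 y (hsub (Ioo_subset_Icc_self hy))).hasDerivAt
      (Icc_mem_nhds hy.1 (hy.2.trans_le hu.2)))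
    ((hvc.mono hsub).intervalIntegrable_of_Icc hu.1)]
  ring
end
end

section
/- Assume a ≠ b. Let x* ∈ C²([0,u_b]) satisfy x*''(u) = −𝒩(u, x*(u))·(x*'(u))³ for all u ∈ [0,u_b] together with the boundary conditions x*(0) = a and x*(u_b) = b. Then x*'(u) ≠ 0 for every u ∈ [0,u_b]; in particular x* is strictly monotone on [0,u_b]. -/
open Set Filter

noncomputable section

/-- A function whose derivative vanishes on a convex set is constant there. -/
theorem eq_of_hasDerivWithinAt_zero {s : Set ℝ} (hs : Convex ℝ s) {f : ℝ → ℝ}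
    (hf : ∀ t ∈ s, HasDerivWithinAt f 0 s t) {x y : ℝ} (hx : x ∈ s) (hy : y ∈ s) :
    f x = f y := by
  have h := Convex.norm_image_sub_le_of_norm_hasDerivWithin_le (C := 0) hf (by simp) hs hy hx
  rw [zero_mul] at h
  exact sub_eq_zero.mp (norm_le_zero_iff.mp h)

/-- A solution of the linear equation `y' = g y` on `[p, q]` with `g` continuous is an everywhere
positive multiple of its initial value. -/
theorem exists_pos_mul_of_hasDerivWithinAt_linear {p q : ℝ} (hpq : p ≤ q) {g y : ℝ → ℝ}
    (hg : ContinuousOn g (Icc p q))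
    (hy : ∀ t ∈ Icc p q, HasDerivWithinAt y (g t * y t) (Icc p q) t) :
    ∀ t ∈ Icc p q, ∃ k : ℝ, 0 < k ∧ y t = k * y p := by
  set h : ℝ → ℝ := IccExtend hpq ((Icc p q).domRestrict g) with hh
  have hcont : Continuous h := (continuousOn_iff_continuous_domRestrict.mp hg).Icc_extend'
  have heq : ∀ t ∈ Icc p q, h t = g t := fun t ht => by
    rw [hh, IccExtend_of_mem hpq _ ht]; rfl
  set G : ℝ → ℝ := fun t => ∫ r in p..t, h r
  have hGd : ∀ t, HasDerivAt G (h t) t := fun t => (hcont.integral_hasStrictDerivAt p t).hasDerivAt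
  have hzero : ∀ t ∈ Icc p q,
      HasDerivWithinAt (fun t => y t * Real.exp (-G t)) 0 (Icc p q) t := fun t ht => by
    refine ((hy t ht).fun_mul (hGd t).fun_neg.exp.hasDerivWithinAt).congr_deriv ?_
    rw [heq t ht]
    ring
  intro t ht
  have hc : y t * Real.exp (-G t) = y p * Real.exp (-G p) :=
    eq_of_hasDerivWithinAt_zero (convex_Icc p q) hzero ht (left_mem_Icc.mpr hpq)
  refine ⟨Real.exp (G t), Real.exp_pos _, ?_⟩
  have hp : G p = 0 := intervalIntegral.integral_same
  rw [hp, neg_zero, Real.exp_zero, mul_one] at hc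
  rw [← hc, mul_left_comm, ← Real.exp_add, add_neg_cancel, Real.exp_zero, mul_one]

/-- a solution of the inverse BVP with `a ≠ b` has a nowhere vanishing
derivative on `[0, u_b]`; in particular it is strictly monotone there. -/
theorem inverse_BVP_deriv_ne_zero
    (a b ub : ℝ) (hub : 0 < ub) (hab : a ≠ b)
    (N : ℝ → ℝ → ℝ) (hN : ContDiff ℝ 1 (Function.uncurry N))
    (xs xs' xs'' : ℝ → ℝ)
    (hx : IsC2On xs xs' xs'' (Icc 0 ub))
    (hode : ∀ u ∈ Icc (0:ℝ) ub, xs'' u = -(Ncal N u (xs u)) * (xs' u) ^ 3)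
    (hx0 : xs 0 = a) (hxb : xs ub = b) :
    (∀ u ∈ Icc (0:ℝ) ub, xs' u ≠ 0) ∧
      (StrictMonoOn xs (Icc 0 ub) ∨ StrictAntiOn xs (Icc 0 ub)) := by
  obtain ⟨hd1, hd2, -⟩ := hx
  have hc : ContinuousOn xs (Icc 0 ub) := fun t ht => (hd1 t ht).continuousWithinAt
  have hc' : ContinuousOn xs' (Icc 0 ub) := fun t ht => (hd2 t ht).continuousWithinAt
  have hNc : ContinuousOn (fun t => N t (xs t)) (Icc 0 ub) :=
    hN.continuous.comp_continuousOn (continuousOn_id.prodMk hc)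
  have hg : ContinuousOn (fun t => -(Ncal N t (xs t)) * (xs' t) ^ 2) (Icc 0 ub) :=
    (hNc.mul continuousOn_id).neg.mul (hc'.pow 2)
  have hlin := exists_pos_mul_of_hasDerivWithinAt_linear hub.le hg fun t ht =>
    (hd2 t ht).congr_deriv (by rw [hode t ht]; ring)
  have h0 : xs' 0 ≠ 0 := fun h0 => hab <| by
    rw [← hx0, ← hxb]
    refine eq_of_hasDerivWithinAt_zero (convex_Icc 0 ub) (fun t ht => ?_)
      (left_mem_Icc.mpr hub.le) (right_mem_Icc.mpr hub.le)
    obtain ⟨k, -, hk⟩ := hlin t ht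
    exact (hd1 t ht).congr_deriv (by rw [hk, h0, mul_zero])
  have hint : ∀ t ∈ interior (Icc 0 ub),
      HasDerivWithinAt xs (xs' t) (interior (Icc 0 ub)) t := fun t ht =>
    (hd1 t (interior_subset ht)).mono interior_subset
  refine ⟨fun t ht => ?_, ?_⟩
  · obtain ⟨k, hk, h⟩ := hlin t ht
    exact h ▸ mul_ne_zero hk.ne' h0
  · rcases h0.lt_or_gt with hneg | hpos
    · refine Or.inr (strictAntiOn_of_hasDerivWithinAt_neg (convex_Icc 0 ub) hc hint fun t ht => ?_)
      obtain ⟨k, hk, h⟩ := hlin t (interior_subset ht)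
      exact h ▸ mul_neg_of_pos_of_neg hk hneg
    · refine Or.inl (strictMonoOn_of_hasDerivWithinAt_pos (convex_Icc 0 ub) hc hint fun t ht => ?_)
      obtain ⟨k, hk, h⟩ := hlin t (interior_subset ht)
      exact h ▸ mul_pos hk hpos
end
end

section
/- Suppose u ∈ C²([a,b]) is a solution of the straight BVP. Then the inverse BVP has exactly one solution x ∈ C²([0,u_b]); this x is strictly increasing and is the inverse function of u, i.e. x(u(t)) = t for all t ∈ [a,b] and u(x(v)) = v for all v ∈ [0,u_b]. -/
open Set Filter

noncomputable section

/-- The inverse BVP: `X ∈ C²([0,u_b])`, `X'' = −𝒩(v, X(v))·(X'(v))³` on `[0,u_b]`,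
`X(0) = a`, `X(u_b) = b`. -/
def IsInverseBVP (N : ℝ → ℝ → ℝ) (a b ub : ℝ) (X X' X'' : ℝ → ℝ) : Prop :=
  IsC2On X X' X'' (Icc 0 ub) ∧
  (∀ v ∈ Icc (0:ℝ) ub, X'' v = -(Ncal N v (X v)) * (X' v) ^ 3) ∧
  X 0 = a ∧ X ub = b

/-- A function with nonnegative derivative on a compact interval is monotone there. -/
theorem monotoneOn_Icc_of_deriv_nonneg {f f' : ℝ → ℝ} {a b : ℝ}
    (hf : ∀ x ∈ Icc a b, HasDerivWithinAt f (f' x) (Icc a b) x)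
    (h0 : ∀ x ∈ Icc a b, 0 ≤ f' x) : MonotoneOn f (Icc a b) :=
  monotoneOn_of_hasDerivWithinAt_nonneg (convex_Icc a b)
    (fun x hx => (hf x hx).continuousWithinAt)
    (fun x hx => (hf x (interior_subset hx)).mono interior_subset)
    (fun x hx => h0 x (interior_subset hx))

/-- A function with nonpositive derivative on a compact interval is antitone there. -/
theorem antitoneOn_Icc_of_deriv_nonpos {f f' : ℝ → ℝ} {a b : ℝ}
    (hf : ∀ x ∈ Icc a b, HasDerivWithinAt f (f' x) (Icc a b) x)
    (h0 : ∀ x ∈ Icc a b, f' x ≤ 0) : AntitoneOn f (Icc a b) :=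
  antitoneOn_of_hasDerivWithinAt_nonpos (convex_Icc a b)
    (fun x hx => (hf x hx).continuousWithinAt)
    (fun x hx => (hf x (interior_subset hx)).mono interior_subset)
    (fun x hx => h0 x (interior_subset hx))

/-- A function with positive derivative on a compact interval is strictly monotone there. -/
theorem strictMonoOn_Icc_of_deriv_pos {f f' : ℝ → ℝ} {a b : ℝ}
    (hf : ∀ x ∈ Icc a b, HasDerivWithinAt f (f' x) (Icc a b) x)
    (h0 : ∀ x ∈ Icc a b, 0 < f' x) : StrictMonoOn f (Icc a b) :=
  strictMonoOn_of_hasDerivWithinAt_pos (convex_Icc a b)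
    (fun x hx => (hf x hx).continuousWithinAt)
    (fun x hx => (hf x (interior_subset hx)).mono interior_subset)
    (fun x hx => h0 x (interior_subset hx))

/-- A two-sided Grönwall argument: a nonnegative `E` with `|E'| ≤ C * E` that vanishes at one point
of a compact interval vanishes on the whole interval. -/
theorem eq_zero_of_abs_deriv_le_mul {E E' : ℝ → ℝ} {a b c C : ℝ}
    (hE : ∀ x ∈ Icc a b, HasDerivWithinAt E (E' x) (Icc a b) x)
    (hpos : ∀ x ∈ Icc a b, 0 ≤ E x) (hbound : ∀ x ∈ Icc a b, |E' x| ≤ C * E x)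
    (hc : c ∈ Icc a b) (hEc : E c = 0) : ∀ x ∈ Icc a b, E x = 0 := by
  have hderiv : ∀ k : ℝ, ∀ x ∈ Icc a b, HasDerivWithinAt (fun x => E x * Real.exp (k * x))
      ((E' x + k * E x) * Real.exp (k * x)) (Icc a b) x := by
    intro k x hx
    have h1 : HasDerivAt (fun x : ℝ => Real.exp (k * x)) (Real.exp (k * x) * (k * 1)) x :=
      ((hasDerivAt_id x).const_mul k).exp
    exact ((hE x hx).mul h1.hasDerivWithinAt).congr_deriv (by ring)
  have hmono : MonotoneOn (fun x => E x * Real.exp (C * x)) (Icc a b) :=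
    monotoneOn_Icc_of_deriv_nonneg (hderiv C) fun x hx =>
      mul_nonneg (by linarith [(abs_le.1 (hbound x hx)).1]) (Real.exp_pos _).le
  have hanti : AntitoneOn (fun x => E x * Real.exp (-C * x)) (Icc a b) :=
    antitoneOn_Icc_of_deriv_nonpos (hderiv (-C)) fun x hx =>
      mul_nonpos_of_nonpos_of_nonneg (by linarith [(abs_le.1 (hbound x hx)).2])
        (Real.exp_pos _).le
  intro x hx
  refine le_antisymm ?_ (hpos x hx)
  rcases le_total x c with h | h
  · have := hmono hx hc h
    simp only [hEc, zero_mul] at this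
    exact nonpos_of_mul_nonpos_left this (Real.exp_pos _)
  · have := hanti hc hx h
    simp only [hEc, zero_mul] at this
    exact nonpos_of_mul_nonpos_left this (Real.exp_pos _)

/-- If the continuous derivative of `f` never vanishes on `[a, b]` and `f a < f b`, then it is
positive. -/
theorem deriv_pos_of_ne_zero_of_lt {f f' : ℝ → ℝ} {a b : ℝ} (hab : a ≤ b)
    (hf : ∀ x ∈ Icc a b, HasDerivWithinAt f (f' x) (Icc a b) x)
    (hcont : ContinuousOn f' (Icc a b)) (hne : ∀ x ∈ Icc a b, f' x ≠ 0) (hlt : f a < f b) :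
    ∀ x ∈ Icc a b, 0 < f' x := by
  intro x hx
  by_contra hneg
  have hall : ∀ y ∈ Icc a b, f' y ≤ 0 := by
    intro y hy
    by_contra hypos
    obtain ⟨z, hz, hz0⟩ := isPreconnected_Icc.intermediate_value hx hy hcont
      ⟨not_lt.1 hneg, (not_le.1 hypos).le⟩
    exact hne z hz hz0
  have := antitoneOn_Icc_of_deriv_nonpos hf hall (left_mem_Icc.2 hab) (right_mem_Icc.2 hab) hab
  linarith

/-- The derivative of an inverse function, within a set. -/
theorem hasDerivWithinAt_of_left_inverse {f g : ℝ → ℝ} {f' v : ℝ} {s t : Set ℝ}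
    (hg : ContinuousWithinAt g s v) (hmaps : MapsTo g s t)
    (hf : HasDerivWithinAt f f' t (g v)) (hf' : f' ≠ 0) (hv : v ∈ s)
    (hfg : ∀ w ∈ s, f (g w) = w) : HasDerivWithinAt g f'⁻¹ s v := by
  have h : HasFDerivWithinAt f
      (ContinuousLinearEquiv.unitsEquivAut ℝ (Units.mk0 f' hf') : ℝ →L[ℝ] ℝ) t (g v) := by
    refine hf.hasFDerivWithinAt.congr_fderiv ?_
    ext
    simp
  have h2 := HasFDerivWithinAt.of_local_left_inverse (hg.tendsto_nhdsWithin hmaps) h hv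
    (eventually_nhdsWithin_of_forall hfg)
  rw [hasDerivWithinAt_iff_hasFDerivWithinAt]
  refine h2.congr_fderiv ?_
  ext
  simp

/-- The inverse of a `C²` function with positive derivative on a compact interval is `C²`. -/
theorem IsC2On.exists_inverse {u u' u'' : ℝ → ℝ} {a b : ℝ} (hab : a ≤ b)
    (hu : IsC2On u u' u'' (Icc a b)) (hpos : ∀ x ∈ Icc a b, 0 < u' x) :
    ∃ X : ℝ → ℝ,
      IsC2On X (fun v => (u' (X v))⁻¹) (fun v => -u'' (X v) * (u' (X v))⁻¹ ^ 3)
        (Icc (u a) (u b)) ∧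
      StrictMonoOn X (Icc (u a) (u b)) ∧ MapsTo X (Icc (u a) (u b)) (Icc a b) ∧
      (∀ t ∈ Icc a b, X (u t) = t) ∧ (∀ v ∈ Icc (u a) (u b), u (X v) = v) := by
  obtain ⟨hd1, hd2, hc2⟩ := hu
  have hcu : ContinuousOn u (Icc a b) := fun x hx => (hd1 x hx).continuousWithinAt
  have hcu' : ContinuousOn u' (Icc a b) := fun x hx => (hd2 x hx).continuousWithinAt
  have hmono : StrictMonoOn u (Icc a b) := strictMonoOn_Icc_of_deriv_pos hd1 hpos
  have hsurj : SurjOn u (Icc a b) (Icc (u a) (u b)) := intermediate_value_Icc hab hcu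
  have hmapsu : MapsTo u (Icc a b) (Icc (u a) (u b)) := fun x hx =>
    ⟨hmono.monotoneOn (left_mem_Icc.2 hab) hx hx.1, hmono.monotoneOn hx (right_mem_Icc.2 hab) hx.2⟩
  set X := Function.invFunOn u (Icc a b)
  have hmaps : MapsTo X (Icc (u a) (u b)) (Icc a b) := hsurj.mapsTo_invFunOn
  have hright : ∀ v ∈ Icc (u a) (u b), u (X v) = v := fun v hv =>
    hsurj.rightInvOn_invFunOn hv
  have hleft : ∀ t ∈ Icc a b, X (u t) = t := fun t ht => hmono.injOn.leftInvOn_invFunOn ht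
  have hXmono : StrictMonoOn X (Icc (u a) (u b)) := by
    intro v hv w hw hvw
    rw [← hmono.lt_iff_lt (hmaps hv) (hmaps hw), hright v hv, hright w hw]
    exact hvw
  have hXcont : ContinuousOn X (Icc (u a) (u b)) := by
    rw [continuousOn_iff_isClosed]
    intro t ht
    refine ⟨u '' (Icc a b ∩ t),
      ((isCompact_Icc.inter_right ht).image_of_continuousOn (hcu.mono inter_subset_left)).isClosed,
      ?_⟩
    ext v
    constructor
    · rintro ⟨hvt, hv⟩
      exact ⟨⟨X v, ⟨hmaps hv, hvt⟩, hright v hv⟩, hv⟩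
    · rintro ⟨⟨x, ⟨hx, hxt⟩, rfl⟩, hv⟩
      exact ⟨by rw [mem_preimage, hleft x hx]; exact hxt, hv⟩
  have hX1 : ∀ v ∈ Icc (u a) (u b), HasDerivWithinAt X (u' (X v))⁻¹ (Icc (u a) (u b)) v :=
    fun v hv => hasDerivWithinAt_of_left_inverse (hXcont v hv) hmaps (hd1 _ (hmaps hv))
      (hpos _ (hmaps hv)).ne' hv hright
  refine ⟨X, ⟨hX1, fun v hv => ?_, ?_⟩, hXmono, hmaps, hleft, hright⟩
  · have hne := (hpos _ (hmaps hv)).ne'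
    refine (((hd2 _ (hmaps hv)).comp v (hX1 v hv) hmaps).inv hne).congr_deriv ?_
    simp only [Function.comp_apply]
    field_simp
  · exact (hc2.comp hXcont hmaps).neg.mul
      (((hcu'.comp hXcont hmaps).inv₀ fun v hv => (hpos _ (hmaps hv)).ne').pow 3)

/-- If `d * d'' ≥ 0` on `[a, b]`, then `d * d'` is monotone there. -/
theorem IsC2On.monotoneOn_mul_deriv {d d' d'' : ℝ → ℝ} {a b : ℝ}
    (hd : IsC2On d d' d'' (Icc a b)) (hsign : ∀ x ∈ Icc a b, 0 ≤ d x * d'' x) :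
    MonotoneOn (fun x => d x * d' x) (Icc a b) :=
  monotoneOn_Icc_of_deriv_nonneg (fun x hx => (hd.1 x hx).mul (hd.2.1 x hx)) fun x hx =>
    add_nonneg (mul_self_nonneg _) (hsign x hx)

theorem IsC2On.hasDerivWithinAt_sq {d d' d'' : ℝ → ℝ} {s : Set ℝ} (hd : IsC2On d d' d'' s)
    {x : ℝ} (hx : x ∈ s) : HasDerivWithinAt (fun x => d x ^ 2) (2 * (d x * d' x)) s x :=
  ((hd.1 x hx).pow 2).congr_deriv (by push_cast; ring)

theorem IsC2On.mono {d d' d'' : ℝ → ℝ} {s t : Set ℝ} (hd : IsC2On d d' d'' s) (hts : t ⊆ s) :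
    IsC2On d d' d'' t :=
  ⟨fun x hx => (hd.1 x (hts hx)).mono hts, fun x hx => (hd.2.1 x (hts hx)).mono hts,
    hd.2.2.mono hts⟩

/-- A function with `d * d'' ≥ 0` that vanishes at both ends of an interval vanishes on it. -/
theorem IsC2On.eq_zero_of_boundary {d d' d'' : ℝ → ℝ} {a b : ℝ}
    (hd : IsC2On d d' d'' (Icc a b)) (hsign : ∀ x ∈ Icc a b, 0 ≤ d x * d'' x)
    (ha : d a = 0) (hb : d b = 0) : ∀ x ∈ Icc a b, d x = 0 := by
  intro x hx
  have hab : a ≤ b := hx.1.trans hx.2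
  have hmono : MonotoneOn (fun x => d x ^ 2) (Icc a b) :=
    monotoneOn_Icc_of_deriv_nonneg (fun y hy => hd.hasDerivWithinAt_sq hy) fun y hy => by
      have := hd.monotoneOn_mul_deriv hsign (left_mem_Icc.2 hab) hy hy.1
      simp only [ha, zero_mul] at this
      linarith
  have := hmono hx (right_mem_Icc.2 hab) hx.2
  simp only [hb] at this
  nlinarith

/-- Under `∂𝒩/∂u ≥ 0` the nonlinearity is monotone in its first argument. -/
theorem monotone_Ncal {N : ℝ → ℝ → ℝ} (hN : ContDiff ℝ 1 (Function.uncurry N)) {x : ℝ}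
    (h : ∀ t : ℝ, 0 ≤ pd1 (Ncal N) t x) : Monotone fun t => Ncal N t x := by
  refine monotone_of_deriv_nonneg ?_ h
  have h1 : Differentiable ℝ fun t => Function.uncurry N (t, x) :=
    (hN.differentiable one_ne_zero).comp (by fun_prop)
  exact h1.mul differentiable_id

/-- A continuous function on a compact interval is bounded there by a nonnegative constant. -/
theorem exists_nonneg_abs_le {q : ℝ → ℝ} {a b : ℝ} (hq : ContinuousOn q (Icc a b)) :
    ∃ C, 0 ≤ C ∧ ∀ x ∈ Icc a b, |q x| ≤ C := by
  obtain ⟨C, hC⟩ := isCompact_Icc.exists_bound_of_continuousOn hq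
  exact ⟨|C|, abs_nonneg C, fun x hx => (hC x hx).trans (le_abs_self C)⟩

/-- Solutions of the straight problem have positive derivative. -/
theorem IsStraightBVP.deriv_pos {N : ℝ → ℝ → ℝ} {a b ub : ℝ} {u u' u'' : ℝ → ℝ}
    (hab : a < b) (hub : 0 < ub) (hN : ContDiff ℝ 1 (Function.uncurry N))
    (hC1 : ∀ t : ℝ, ∀ x ∈ Icc a b, 0 ≤ pd1 (Ncal N) t x)
    (hu : IsStraightBVP N a b ub u u' u'') : ∀ x ∈ Icc a b, 0 < u' x := by
  obtain ⟨hC2u, heq, ha, hb⟩ := hu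
  have hcu : ContinuousOn u (Icc a b) := fun x hx => (hC2u.1 x hx).continuousWithinAt
  have hsign : ∀ x ∈ Icc a b, 0 ≤ u x * u'' x := by
    intro x hx
    have hmono := monotone_Ncal hN fun t => hC1 t x hx
    have h0 : Ncal N 0 x = 0 := by simp [Ncal]
    rw [heq x hx]
    rcases le_total 0 (u x) with h | h
    · exact mul_nonneg h (h0 ▸ hmono h)
    · exact mul_nonneg_of_nonpos_of_nonpos h (h0 ▸ hmono h)
  have hcn : ContinuousOn (fun x => N (u x) x) (Icc a b) :=
    hN.continuous.comp_continuousOn (hcu.prodMk continuousOn_id)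
  obtain ⟨K, hK0, hK⟩ := exists_nonneg_abs_le hcn
  refine deriv_pos_of_ne_zero_of_lt hab.le hC2u.1
    (fun x hx => (hC2u.2.1 x hx).continuousWithinAt) ?_ (by rw [ha, hb]; exact hub)
  intro c hc hc0
  have huc : u c = 0 := by
    have hsub : Icc a c ⊆ Icc a b := Icc_subset_Icc_right hc.2
    have hanti : AntitoneOn (fun x => u x ^ 2) (Icc a c) :=
      antitoneOn_Icc_of_deriv_nonpos (fun y hy => (hC2u.mono hsub).hasDerivWithinAt_sq hy)
        fun y hy => by
          have := hC2u.monotoneOn_mul_deriv hsign (hsub hy) hc hy.2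
          simp only [hc0, mul_zero] at this
          linarith
    have := hanti (left_mem_Icc.2 hc.1) (right_mem_Icc.2 hc.1) hc.1
    simp only [ha] at this
    nlinarith
  have hzero := eq_zero_of_abs_deriv_le_mul (E := fun x => u x ^ 2 + u' x ^ 2)
    (E' := fun x => 2 * (u x * u' x) + 2 * (u' x * u'' x)) (C := 1 + K)
    (fun x hx => (hC2u.hasDerivWithinAt_sq hx).add
      (((hC2u.2.1 x hx).pow 2).congr_deriv (by push_cast; ring)))
    (fun x _ => by positivity)
    (fun x hx => by
      have h1 : 2 * (u x * u' x) + 2 * (u' x * u'' x)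
          = (1 + N (u x) x) * (2 * (u x * u' x)) := by
        rw [heq x hx, Ncal]; ring
      have h2 : |2 * (u x * u' x)| ≤ u x ^ 2 + u' x ^ 2 :=
        abs_le.2 ⟨by nlinarith [sq_nonneg (u x + u' x)], by nlinarith [sq_nonneg (u x - u' x)]⟩
      have h3 : |1 + N (u x) x| ≤ 1 + K := by
        have := hK x hx
        rw [abs_le] at this ⊢
        constructor <;> linarith
      rw [h1, abs_mul]
      exact mul_le_mul h3 h2 (abs_nonneg _) (by linarith))
    hc (by simp [huc, hc0]) b (right_mem_Icc.2 hab.le)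
  simp only [hb] at hzero
  nlinarith [sq_nonneg (u' b)]

/-- Solutions of the inverse problem have positive derivative. -/
theorem IsInverseBVP.deriv_pos {N : ℝ → ℝ → ℝ} {a b ub : ℝ} {Y Y' Y'' : ℝ → ℝ}
    (hab : a < b) (hub : 0 < ub) (hN : ContDiff ℝ 1 (Function.uncurry N))
    (hY : IsInverseBVP N a b ub Y Y' Y'') : ∀ v ∈ Icc 0 ub, 0 < Y' v := by
  obtain ⟨⟨hd1, hd2, -⟩, heq, h0, hb⟩ := hY
  have hcY : ContinuousOn Y (Icc 0 ub) := fun x hx => (hd1 x hx).continuousWithinAt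
  have hcY' : ContinuousOn Y' (Icc 0 ub) := fun x hx => (hd2 x hx).continuousWithinAt
  have hcn : ContinuousOn (fun v => N v (Y v)) (Icc 0 ub) :=
    hN.continuous.comp_continuousOn (continuousOn_id.prodMk hcY)
  have hcq : ContinuousOn (fun v => -2 * Ncal N v (Y v) * Y' v ^ 2) (Icc 0 ub) :=
    (continuousOn_const.mul (hcn.mul continuousOn_id)).mul (hcY'.pow 2)
  obtain ⟨K, -, hK⟩ := exists_nonneg_abs_le hcq
  refine deriv_pos_of_ne_zero_of_lt hub.le hd1 hcY' ?_ (by rw [h0, hb]; exact hab)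
  intro c hc hc0
  have hzero := eq_zero_of_abs_deriv_le_mul (E := fun v => Y' v ^ 2)
    (E' := fun v => 2 * (Y' v * Y'' v)) (C := K)
    (fun v hv => ((hd2 v hv).pow 2).congr_deriv (by push_cast; ring))
    (fun v _ => by positivity)
    (fun v hv => by
      have h1 : 2 * (Y' v * Y'' v) = (-2 * Ncal N v (Y v) * Y' v ^ 2) * Y' v ^ 2 := by
        rw [heq v hv]; ring
      rw [h1, abs_mul, abs_of_nonneg (sq_nonneg (Y' v))]
      exact mul_le_mul_of_nonneg_right (hK v hv) (sq_nonneg _))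
    hc (by simp [hc0])
  have hanti := antitoneOn_Icc_of_deriv_nonpos hd1
    (fun v hv => (pow_eq_zero_iff two_ne_zero).1 (hzero v hv) |>.le)
    (left_mem_Icc.2 hub.le) (right_mem_Icc.2 hub.le) hub.le
  linarith

/-- The straight problem has at most one solution. -/
theorem IsStraightBVP.unique {N : ℝ → ℝ → ℝ} {a b ub : ℝ} {u u' u'' w w' w'' : ℝ → ℝ}
    (hN : ContDiff ℝ 1 (Function.uncurry N))
    (hC1 : ∀ t : ℝ, ∀ x ∈ Icc a b, 0 ≤ pd1 (Ncal N) t x)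
    (hu : IsStraightBVP N a b ub u u' u'') (hw : IsStraightBVP N a b ub w w' w'') :
    ∀ x ∈ Icc a b, u x = w x := by
  obtain ⟨hu2, hueq, hua, hub⟩ := hu
  obtain ⟨hw2, hweq, hwa, hwb⟩ := hw
  have hd : IsC2On (fun x => u x - w x) (fun x => u' x - w' x) (fun x => u'' x - w'' x)
      (Icc a b) :=
    ⟨fun x hx => (hu2.1 x hx).sub (hw2.1 x hx), fun x hx => (hu2.2.1 x hx).sub (hw2.2.1 x hx),
      hu2.2.2.sub hw2.2.2⟩
  intro x hx
  refine sub_eq_zero.1 (hd.eq_zero_of_boundary (fun y hy => ?_) (by simp [hua, hwa])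
    (by simp [hub, hwb]) x hx)
  have hmono := monotone_Ncal hN fun t => hC1 t y hy
  rw [hueq y hy, hweq y hy]
  rcases le_total (w y) (u y) with h | h
  · exact mul_nonneg (sub_nonneg.2 h) (sub_nonneg.2 (hmono h))
  · exact mul_nonneg_of_nonpos_of_nonpos (sub_nonpos.2 h) (sub_nonpos.2 (hmono h))

/-- if the straight BVP has a solution `u`, then the inverse BVP has exactly
one solution; it is strictly increasing and is the inverse function of `u`. -/
theorem inverse_BVP_exists_unique
    (a b ub : ℝ) (hab : a < b) (hub : 0 < ub)
    (N : ℝ → ℝ → ℝ) (hN : ContDiff ℝ 1 (Function.uncurry N))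
    (hC1 : ∀ t : ℝ, ∀ x ∈ Icc a b, 0 ≤ pd1 (Ncal N) t x)
    (hC2 : ∀ t : ℝ, 0 ≤ t → ∀ x ∈ Icc a b, 0 ≤ N t x)
    (u u' u'' : ℝ → ℝ)
    (hu : IsStraightBVP N a b ub u u' u'') :
    ∃ X X' X'' : ℝ → ℝ,
      IsInverseBVP N a b ub X X' X'' ∧
      StrictMonoOn X (Icc 0 ub) ∧
      (∀ t ∈ Icc a b, X (u t) = t) ∧
      (∀ v ∈ Icc (0:ℝ) ub, u (X v) = v) ∧
      (∀ Y Y' Y'' : ℝ → ℝ, IsInverseBVP N a b ub Y Y' Y'' →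
        ∀ v ∈ Icc (0:ℝ) ub, Y v = X v) := by
  obtain ⟨X, hXC2, hXmono, hXmaps, hXleft, hXright⟩ :=
    hu.1.exists_inverse hab.le (hu.deriv_pos hab hub hN hC1)
  have hua : u a = 0 := hu.2.2.1
  have hubb : u b = ub := hu.2.2.2
  rw [hua, hubb] at hXC2 hXmono hXmaps hXright
  refine ⟨X, _, _, ⟨hXC2, fun v hv => ?_, ?_, ?_⟩, hXmono, hXleft, hXright, ?_⟩
  · rw [hu.2.1 _ (hXmaps hv), hXright v hv]
  · rw [← hua, hXleft a (left_mem_Icc.2 hab.le)]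
  · rw [← hubb, hXleft b (right_mem_Icc.2 hab.le)]
  · intro Y Y' Y'' hY v hv
    have hYpos := hY.deriv_pos hab hub hN
    obtain ⟨w, hwC2, -, hwmaps, hwleft, hwright⟩ := hY.1.exists_inverse hub.le hYpos
    have hY0 : Y 0 = a := hY.2.2.1
    have hYb : Y ub = b := hY.2.2.2
    have hYmono := (strictMonoOn_Icc_of_deriv_pos hY.1.1 hYpos).monotoneOn
    have hYv : Y v ∈ Icc a b := by
      rw [← hY0, ← hYb]
      exact ⟨hYmono (left_mem_Icc.2 hub.le) hv hv.1, hYmono hv (right_mem_Icc.2 hub.le) hv.2⟩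
    rw [hY0, hYb] at hwC2 hwmaps hwright
    have hw : IsStraightBVP N a b ub w (fun x => (Y' (w x))⁻¹)
        (fun x => -Y'' (w x) * (Y' (w x))⁻¹ ^ 3) := by
      refine ⟨hwC2, fun x hx => ?_, ?_, ?_⟩
      · have hne := (hYpos _ (hwmaps hx)).ne'
        simp only
        rw [hY.2.1 _ (hwmaps hx), hwright x hx]
        field_simp
      · rw [← hY0, hwleft 0 (left_mem_Icc.2 hub.le)]
      · rw [← hYb, hwleft ub (right_mem_Icc.2 hub.le)]
    have huw : u (Y v) = v := by rw [hu.unique hN hC1 hw _ hYv, hwleft v hv]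
    rw [← hXleft (Y v) hYv, huw]
end
end

section
/- Assume hypothesis (H) and fix a straight mesh on [a,c]. If ν > ν̄ ≥ 0, then ũ_ν(x) > ũ_ν̄(x) for every x ∈ (a,c], and ũ_ν'(x) > ũ_ν̄'(x) for every x ∈ [a,c]. -/
open Set Filter

noncomputable section

/-- Hypothesis (H): `N`, `∂N/∂x`, `∂N/∂u`, `∂²N/∂x∂u`, `∂²N/∂u²` are all
nonnegative for `u ≥ 0` and `x ∈ [a,b]`. -/
def HypH (N : ℝ → ℝ → ℝ) (a b : ℝ) : Prop :=
  ∀ u : ℝ, 0 ≤ u → ∀ x ∈ Icc a b,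
    0 ≤ N u x ∧ 0 ≤ pd2 N u x ∧ 0 ≤ pd1 N u x ∧
    0 ≤ pd2 (pd1 N) u x ∧ 0 ≤ pd1 (pd1 N) u x

/-- A mesh: finitely many strictly increasing points `pt 0 < pt 1 < ⋯ < pt n`. -/
structure Mesh where
  n : ℕ
  pt : ℕ → ℝ
  npos : 0 < n
  mono : ∀ i < n, pt i < pt (i + 1)

/-- The coefficient `α_i(p,q,x)` of the straight discretized equation,
where `xi` is the mesh point `x_i`. -/
def alphaC (N : ℝ → ℝ → ℝ) (xi p q x : ℝ) : ℝ :=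
  (pd1 N q xi * p + pd2 N q xi) * (x - xi) + N q xi

/-- The coefficient `β_i(p,q,v)` of the inverse discretized equation,
where `ui` is the (shifted) mesh point `ū_i`. -/
def betaC (N : ℝ → ℝ → ℝ) (ui p q v : ℝ) : ℝ :=
  -(pd1 (Ncal N) ui q + pd2 (Ncal N) ui q * p) * (v - ui) - Ncal N ui q

/-- Shifted mesh knots `ū_i = max(u_i, s)`. -/
def ubar (m : Mesh) (s : ℝ) (i : ℕ) : ℝ := max (m.pt i) s

/-- A straight scheme solution on `[a,c]` with respect to the mesh `m`:
`ũ ∈ C¹([a,c])` and on each mesh subinterval `[x_i, x_{i+1}]` the second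
derivative of `ũ` equals `α_i(ũ'(x_i), ũ(x_i), x)·ũ(x)`. -/
def IsStraightSol (N : ℝ → ℝ → ℝ) (a c : ℝ) (m : Mesh) (u u' : ℝ → ℝ) : Prop :=
  (∀ x ∈ Icc a c, HasDerivWithinAt u (u' x) (Icc a c) x) ∧
  ContinuousOn u' (Icc a c) ∧
  ∀ i < m.n, ∀ x ∈ Icc (m.pt i) (m.pt (i + 1)),
    HasDerivWithinAt u'
      (alphaC N (m.pt i) (u' (m.pt i)) (u (m.pt i)) x * u x)
      (Icc (m.pt i) (m.pt (i + 1))) x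

/-- An inverse scheme solution on `[s, ub]` with respect to the mesh `m` (shifted by `s`):
`x̃ ∈ C¹([s,ub])` and on each subinterval `[ū_i, ū_{i+1}]` the second derivative of `x̃`
equals `β_i(x̃'(ū_i), x̃(ū_i), v)·(x̃'(v))³`. -/
def IsInvSol (N : ℝ → ℝ → ℝ) (ub : ℝ) (m : Mesh) (s : ℝ) (X X' : ℝ → ℝ) : Prop :=
  (∀ v ∈ Icc s ub, HasDerivWithinAt X (X' v) (Icc s ub) v) ∧
  ContinuousOn X' (Icc s ub) ∧
  ∀ i < m.n, ∀ v ∈ Icc (ubar m s i) (ubar m s (i + 1)),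
    HasDerivWithinAt X'
      (betaC N (ubar m s i) (X' (ubar m s i)) (X (ubar m s i)) v * (X' v) ^ 3)
      (Icc (ubar m s i) (ubar m s (i + 1))) v

/-- A scheme pair `(ũ, x̃)`. -/
def IsSchemePair (N : ℝ → ℝ → ℝ) (a b c ub : ℝ) (ms mi : Mesh)
    (u u' X X' : ℝ → ℝ) : Prop :=
  IsStraightSol N a c ms u u' ∧ u a = 0 ∧ 0 < u c ∧ u c < ub ∧ u' c ≠ 0 ∧
  IsInvSol N ub mi (u c) X X' ∧ X ub = b ∧ X (u c) = c ∧ X' (u c) = 1 / u' c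

/-- A scheme pair additionally satisfying the sign inequalities
`0 < ũ < u_b`, `ũ' > 0`, `ũ'' ≥ 0` on `(a,c]`, and `c < x̃`, `x̃' > 0`, `x̃'' ≤ 0`
on `(ũ(c), u_b]` (second derivatives taken on the mesh subintervals). -/
def GoodPair (N : ℝ → ℝ → ℝ) (a b c ub : ℝ) (ms mi : Mesh)
    (u u' X X' : ℝ → ℝ) : Prop :=
  IsSchemePair N a b c ub ms mi u u' X X' ∧
  (∀ x ∈ Ioc a c, 0 < u x ∧ u x < ub ∧ 0 < u' x) ∧
  (∀ i < ms.n, ∀ x ∈ Icc (ms.pt i) (ms.pt (i + 1)), x ∈ Ioc a c →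
    0 ≤ alphaC N (ms.pt i) (u' (ms.pt i)) (u (ms.pt i)) x * u x) ∧
  (∀ v ∈ Ioc (u c) ub, c < X v ∧ 0 < X' v) ∧
  (∀ i < mi.n, ∀ v ∈ Icc (ubar mi (u c) i) (ubar mi (u c) (i + 1)), v ∈ Ioc (u c) ub →
    betaC N (ubar mi (u c) i) (X' (ubar mi (u c) i)) (X (ubar mi (u c) i)) v * (X' v) ^ 3 ≤ 0)

/-- All steps of the straight mesh `ms` and of the (shifted) inverse mesh `mi`
are of size at most `h`. -/
def StepLe (ms mi : Mesh) (s h : ℝ) : Prop :=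
  (∀ i < ms.n, ms.pt (i + 1) - ms.pt i ≤ h) ∧
  (∀ i < mi.n, ubar mi s (i + 1) - ubar mi s i ≤ h)

/-- A function with nonnegative derivative within a compact interval is monotone there. -/
theorem monotoneOn_Icc_of_hasDerivWithinAt {f f' : ℝ → ℝ} {s t : ℝ}
    (hf : ∀ x ∈ Icc s t, HasDerivWithinAt f (f' x) (Icc s t) x)
    (hf' : ∀ x ∈ Icc s t, 0 ≤ f' x) : MonotoneOn f (Icc s t) :=
  monotoneOn_of_hasDerivWithinAt_nonneg (convex_Icc s t)
    (fun x hx => (hf x hx).continuousWithinAt)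
    (fun x hx => (hf x (interior_subset hx)).mono interior_subset)
    (fun x hx => hf' x (interior_subset hx))

/-- A solution of `w'' ≥ A w` with `A ≥ 0` bounded and nonnegative initial data has nonnegative
derivative. -/
theorem deriv_nonneg_of_second_deriv_ge {w w' w'' A : ℝ → ℝ} {s t k : ℝ} (hk : 0 < k)
    (hw : ∀ x ∈ Icc s t, HasDerivWithinAt w (w' x) (Icc s t) x)
    (hw' : ∀ x ∈ Icc s t, HasDerivWithinAt w' (w'' x) (Icc s t) x)
    (hA : ∀ x ∈ Icc s t, 0 ≤ A x) (hAk : ∀ x ∈ Icc s t, A x ≤ k ^ 2)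
    (hw'' : ∀ x ∈ Icc s t, A x * w x ≤ w'' x) (hs : 0 ≤ w s) (hs' : 0 ≤ w' s) :
    ∀ x ∈ Icc s t, 0 ≤ w' x := by
  intro y hy
  have hst : s ≤ t := hy.1.trans hy.2
  have hsm : s ∈ Icc s t := left_mem_Icc.2 hst
  have hE : ∀ x, HasDerivAt (fun x => Real.exp (k * (x - s)))
      (Real.exp (k * (x - s)) * k) x := fun x => by
    simpa using (((hasDerivAt_id x).sub_const s).const_mul k).exp
  have hcont : ContinuousOn (fun x => w' x / Real.exp (k * (x - s))) (Icc s t) :=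
    ContinuousOn.div (fun x hx => (hw' x hx).continuousWithinAt)
      (fun x _ => (hE x).continuousAt.continuousWithinAt) (fun x _ => (Real.exp_pos _).ne')
  obtain ⟨τ, hτ, hmin⟩ := isCompact_Icc.exists_isMinOn ⟨s, hsm⟩ hcont
  obtain ⟨m, hm⟩ : ∃ m, m = -(w' τ / Real.exp (k * (τ - s))) := ⟨_, rfl⟩
  have hbound : ∀ x ∈ Icc s t, -m * Real.exp (k * (x - s)) ≤ w' x := fun x hx => by
    have h := hmin hx
    simp only [mem_ofPred_eq] at h
    rw [hm, neg_neg]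
    exact (le_div_iff₀ (Real.exp_pos _)).1 h
  have hτm : w' τ = -m * Real.exp (k * (τ - s)) := by
    rw [hm, neg_neg, div_mul_cancel₀ _ (Real.exp_pos _).ne']
  rcases le_or_gt m 0 with hm0 | hm0
  · exact (mul_nonneg (neg_nonneg.2 hm0) (Real.exp_pos _).le).trans (hbound y hy)
  exfalso
  have hmono : MonotoneOn (fun x => w x + m / k * Real.exp (k * (x - s))) (Icc s t) :=
    monotoneOn_Icc_of_hasDerivWithinAt
      (fun x hx => (hw x hx).add ((hE x).hasDerivWithinAt.const_mul (m / k))) fun x hx => by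
        have h := hbound x hx
        have e : m / k * (Real.exp (k * (x - s)) * k) = m * Real.exp (k * (x - s)) := by
          field_simp
        rw [e]; linarith
  have hwlow : ∀ x ∈ Icc s t, 0 ≤ w x + m / k * Real.exp (k * (x - s)) := fun x hx => by
    have h := hmono hsm hx hx.1
    have hmk : 0 < m / k := div_pos hm0 hk
    simp only [sub_self, mul_zero, Real.exp_zero, mul_one] at h
    linarith
  have hmono' : MonotoneOn (fun x => w' x + m * Real.exp (k * (x - s))) (Icc s t) :=
    monotoneOn_Icc_of_hasDerivWithinAt
      (fun x hx => (hw' x hx).add ((hE x).hasDerivWithinAt.const_mul m)) fun x hx => by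
        have h1 := mul_nonneg (hA x hx) (hwlow x hx)
        have h2 := mul_le_mul_of_nonneg_right (hAk x hx)
          (mul_pos (div_pos hm0 hk) (Real.exp_pos (k * (x - s)))).le
        have e : k ^ 2 * (m / k * Real.exp (k * (x - s))) = m * (Real.exp (k * (x - s)) * k) := by
          field_simp
        have h3 := hw'' x hx
        rw [mul_add] at h1
        linarith
  have h := hmono' hsm hτ hτ.1
  simp only [sub_self, mul_zero, Real.exp_zero, mul_one] at h
  linarith

/-- Nonnegativity of `w` itself under the hypotheses of `deriv_nonneg_of_second_deriv_ge`. -/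
theorem nonneg_of_second_deriv_ge {w w' w'' A : ℝ → ℝ} {s t k : ℝ} (hk : 0 < k)
    (hw : ∀ x ∈ Icc s t, HasDerivWithinAt w (w' x) (Icc s t) x)
    (hw' : ∀ x ∈ Icc s t, HasDerivWithinAt w' (w'' x) (Icc s t) x)
    (hA : ∀ x ∈ Icc s t, 0 ≤ A x) (hAk : ∀ x ∈ Icc s t, A x ≤ k ^ 2)
    (hw'' : ∀ x ∈ Icc s t, A x * w x ≤ w'' x) (hs : 0 ≤ w s) (hs' : 0 ≤ w' s) :
    ∀ x ∈ Icc s t, 0 ≤ w x := fun x hx =>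
  hs.trans (monotoneOn_Icc_of_hasDerivWithinAt hw
    (deriv_nonneg_of_second_deriv_ge hk hw hw' hA hAk hw'' hs hs')
    (left_mem_Icc.2 (hx.1.trans hx.2)) hx hx.1)

/-- Comparison of two linear equations `u'' = A u`, `v'' = B v` with `0 ≤ B ≤ A` and ordered
initial data. -/
theorem linear_second_order_comparison {u u' v v' A B : ℝ → ℝ} {s t : ℝ}
    (hu : ∀ x ∈ Icc s t, HasDerivWithinAt u (u' x) (Icc s t) x)
    (hu' : ∀ x ∈ Icc s t, HasDerivWithinAt u' (A x * u x) (Icc s t) x)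
    (hv : ∀ x ∈ Icc s t, HasDerivWithinAt v (v' x) (Icc s t) x)
    (hv' : ∀ x ∈ Icc s t, HasDerivWithinAt v' (B x * v x) (Icc s t) x)
    (hA : ContinuousOn A (Icc s t)) (hB : ∀ x ∈ Icc s t, 0 ≤ B x)
    (hBA : ∀ x ∈ Icc s t, B x ≤ A x)
    (hvs : 0 ≤ v s) (hvs' : 0 ≤ v' s) (huv : v s ≤ u s) (huv' : v' s < u' s) :
    ∀ x ∈ Icc s t, 0 ≤ v x ∧ 0 ≤ v' x ∧ v x ≤ u x ∧ v' x < u' x ∧ (s < x → v x < u x) := by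
  obtain ⟨M, hM⟩ := isCompact_Icc.bddAbove_image hA
  have hAM : ∀ x ∈ Icc s t, A x ≤ (1 + |M|) ^ 2 := fun x hx => by
    have h := hM (mem_image_of_mem A hx)
    nlinarith [le_abs_self M, abs_nonneg M]
  have hk : 0 < 1 + |M| := by positivity
  have hBM : ∀ x ∈ Icc s t, B x ≤ (1 + |M|) ^ 2 := fun x hx => (hBA x hx).trans (hAM x hx)
  have hA0 : ∀ x ∈ Icc s t, 0 ≤ A x := fun x hx => (hB x hx).trans (hBA x hx)
  have hv0 := nonneg_of_second_deriv_ge hk hv hv' hB hBM (fun _ _ => le_rfl) hvs hvs'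
  have hv0' := deriv_nonneg_of_second_deriv_ge hk hv hv' hB hBM (fun _ _ => le_rfl) hvs hvs'
  have hd : ∀ x ∈ Icc s t, HasDerivWithinAt (fun x => u x - v x) (u' x - v' x) (Icc s t) x :=
    fun x hx => (hu x hx).sub (hv x hx)
  have hd' : ∀ x ∈ Icc s t,
      HasDerivWithinAt (fun x => u' x - v' x) (A x * u x - B x * v x) (Icc s t) x :=
    fun x hx => (hu' x hx).sub (hv' x hx)
  have hd'' : ∀ x ∈ Icc s t, A x * (u x - v x) ≤ A x * u x - B x * v x := fun x hx => by
    have h := mul_le_mul_of_nonneg_right (hBA x hx) (hv0 x hx)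
    linarith
  have hd0 := nonneg_of_second_deriv_ge hk hd hd' hA0 hAM hd''
    (sub_nonneg.2 huv) (sub_nonneg.2 huv'.le)
  have hmono' := monotoneOn_Icc_of_hasDerivWithinAt hd' fun x hx =>
    (mul_nonneg (hA0 x hx) (hd0 x hx)).trans (hd'' x hx)
  have hpos' : ∀ x ∈ Icc s t, 0 < u' x - v' x := fun x hx =>
    (sub_pos.2 huv').trans_le (hmono' (left_mem_Icc.2 (hx.1.trans hx.2)) hx hx.1)
  have hstrict : StrictMonoOn (fun x => u x - v x) (Icc s t) :=
    strictMonoOn_of_hasDerivWithinAt_pos (convex_Icc s t)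
      (fun x hx => (hd x hx).continuousWithinAt)
      (fun x hx => (hd x (interior_subset hx)).mono interior_subset)
      (fun x hx => hpos' x (interior_subset hx))
  intro x hx
  refine ⟨hv0 x hx, hv0' x hx, sub_nonneg.1 (hd0 x hx), sub_pos.1 (hpos' x hx), fun hsx => ?_⟩
  have h := hstrict (left_mem_Icc.2 (hx.1.trans hx.2)) hx hsx
  simp only at h
  linarith

theorem hasDerivAt_pd1 {f : ℝ → ℝ → ℝ} (hf : Differentiable ℝ (Function.uncurry f)) (u x : ℝ) :
    HasDerivAt (fun t => f t x) (fderiv ℝ (Function.uncurry f) (u, x) (1, 0)) u :=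
  HasFDerivAt.comp_hasDerivAt (f := fun t : ℝ => (t, x)) u (hf (u, x)).hasFDerivAt
    ((hasDerivAt_id u).prodMk (hasDerivAt_const u x))

theorem hasDerivAt_pd2 {f : ℝ → ℝ → ℝ} (hf : Differentiable ℝ (Function.uncurry f)) (u x : ℝ) :
    HasDerivAt (fun s => f u s) (fderiv ℝ (Function.uncurry f) (u, x) (0, 1)) x :=
  HasFDerivAt.comp_hasDerivAt (f := fun s : ℝ => (u, s)) x (hf (u, x)).hasFDerivAt
    ((hasDerivAt_const x u).prodMk (hasDerivAt_id x))

/-- Equality of mixed partial derivatives, together with differentiability in the first argument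
of both first-order partial derivatives. -/
theorem hasDerivAt_pd1_pd_of_contDiff {N : ℝ → ℝ → ℝ} (hN : ContDiff ℝ 2 (Function.uncurry N))
    (u x : ℝ) :
    HasDerivAt (fun t => pd1 N t x) (pd1 (pd1 N) u x) u ∧
    HasDerivAt (fun t => pd2 N t x) (pd2 (pd1 N) u x) u := by
  have hd : Differentiable ℝ (Function.uncurry N) := hN.differentiable (by norm_num)
  have hd2 : Differentiable ℝ (fderiv ℝ (Function.uncurry N)) :=
    (hN.fderiv_right (m := 1) (by norm_num)).differentiable (by norm_num)
  have e1 : ∀ t y, pd1 N t y = fderiv ℝ (Function.uncurry N) (t, y) (1, 0) :=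
    fun t y => (hasDerivAt_pd1 hd t y).deriv
  have e2 : ∀ t y, pd2 N t y = fderiv ℝ (Function.uncurry N) (t, y) (0, 1) :=
    fun t y => (hasDerivAt_pd2 hd t y).deriv
  have hu : ∀ e : ℝ × ℝ, HasDerivAt (fun t => fderiv ℝ (Function.uncurry N) (t, x) e)
      (fderiv ℝ (fderiv ℝ (Function.uncurry N)) (u, x) (1, 0) e) u := fun e => by
    have h := HasFDerivAt.comp_hasDerivAt (f := fun t : ℝ => (t, x)) u (hd2 (u, x)).hasFDerivAt
      ((hasDerivAt_id u).prodMk (hasDerivAt_const u x))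
    simpa using h.clm_apply (hasDerivAt_const u e)
  have hx : HasDerivAt (fun s => fderiv ℝ (Function.uncurry N) (u, s) (1, 0))
      (fderiv ℝ (fderiv ℝ (Function.uncurry N)) (u, x) (0, 1) (1, 0)) x := by
    have h := HasFDerivAt.comp_hasDerivAt (f := fun s : ℝ => (u, s)) x (hd2 (u, x)).hasFDerivAt
      ((hasDerivAt_const x u).prodMk (hasDerivAt_id x))
    simpa using h.clm_apply (hasDerivAt_const x ((1, 0) : ℝ × ℝ))
  have hsymm : IsSymmSndFDerivAt ℝ (Function.uncurry N) (u, x) :=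
    hN.contDiffAt.isSymmSndFDerivAt (by simp)
  have hmixed : pd2 (pd1 N) u x =
      fderiv ℝ (fderiv ℝ (Function.uncurry N)) (u, x) (1, 0) (0, 1) := by
    rw [hsymm.eq, ← hx.deriv, pd2]
    simp only [e1]
  constructor
  · simp only [e1]
    rw [pd1]
    simp only [e1]
    exact (hu _).differentiableAt.hasDerivAt
  · simp only [e2]
    rw [hmixed]
    exact hu _

theorem monotoneOn_Ici_of_hasDerivAt {f f' : ℝ → ℝ} {s : ℝ} (hf : ∀ x, HasDerivAt f (f' x) x)
    (hf' : ∀ x, s ≤ x → 0 ≤ f' x) : MonotoneOn f (Ici s) :=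
  monotoneOn_of_hasDerivWithinAt_nonneg (convex_Ici s)
    (fun x _ => (hf x).continuousAt.continuousWithinAt)
    (fun x _ => (hf x).hasDerivWithinAt) (fun x hx => hf' x (interior_subset hx))

theorem HypH.alphaC_nonneg {N : ℝ → ℝ → ℝ} {a b : ℝ} (hH : HypH N a b) {xi p q x : ℝ}
    (hxi : xi ∈ Icc a b) (hp : 0 ≤ p) (hq : 0 ≤ q) (hx : xi ≤ x) : 0 ≤ alphaC N xi p q x := by
  obtain ⟨h0, h2, h1, -, -⟩ := hH q hq xi hxi
  have := sub_nonneg.2 hx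
  unfold alphaC
  positivity

/-- Under (H), the coefficient `alphaC` is monotone in the slope and in the value. -/
theorem HypH.alphaC_mono {N : ℝ → ℝ → ℝ} {a b : ℝ} (hH : HypH N a b)
    (hN : ContDiff ℝ 2 (Function.uncurry N)) {xi p₁ p₂ q₁ q₂ x : ℝ} (hxi : xi ∈ Icc a b)
    (hp₂ : 0 ≤ p₂) (hp : p₂ ≤ p₁) (hq₂ : 0 ≤ q₂) (hq : q₂ ≤ q₁) (hx : xi ≤ x) :
    alphaC N xi p₂ q₂ x ≤ alphaC N xi p₁ q₁ x := by
  have hd : Differentiable ℝ (Function.uncurry N) := hN.differentiable (by norm_num)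
  have hNu : ∀ t, HasDerivAt (fun t => N t xi) (pd1 N t xi) t := fun t =>
    (hasDerivAt_pd1 hd t xi).differentiableAt.hasDerivAt
  have hq₁ : q₁ ∈ Ici (0 : ℝ) := hq₂.trans hq
  have m0 := monotoneOn_Ici_of_hasDerivAt hNu (fun t ht => (hH t ht xi hxi).2.2.1) hq₂ hq₁ hq
  have m1 := monotoneOn_Ici_of_hasDerivAt (fun t => (hasDerivAt_pd1_pd_of_contDiff hN t xi).1)
    (fun t ht => (hH t ht xi hxi).2.2.2.2) hq₂ hq₁ hq
  have m2 := monotoneOn_Ici_of_hasDerivAt (fun t => (hasDerivAt_pd1_pd_of_contDiff hN t xi).2)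
    (fun t ht => (hH t ht xi hxi).2.2.2.1) hq₂ hq₁ hq
  have h1 := (hH q₁ hq₁ xi hxi).2.2.1
  have hx' := sub_nonneg.2 hx
  simp only at m0 m1 m2
  unfold alphaC
  gcongr

theorem Mesh.pt_le_pt (m : Mesh) {i j : ℕ} (hij : i ≤ j) (hj : j ≤ m.n) : m.pt i ≤ m.pt j := by
  induction j, hij using Nat.le_induction with
  | base => exact le_rfl
  | succ j _ ih => exact (ih (by omega)).trans (m.mono j (by omega)).le

/-- monotonicity of the straight scheme solutions with respect to the
initial slope: if `ν > ν̄ ≥ 0` then `ũ_ν > ũ_ν̄` on `(a,c]` and `ũ_ν' > ũ_ν̄'` on `[a,c]`. -/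
theorem straight_scheme_monotone_in_slope
    (a b c ub : ℝ) (hab : a < b) (hub : 0 < ub) (hc : c ∈ Ioo a b)
    (N : ℝ → ℝ → ℝ) (hN : ContDiff ℝ 2 (Function.uncurry N))
    (hH : HypH N a b)
    (ms : Mesh) (hms0 : ms.pt 0 = a) (hmsn : ms.pt ms.n = c)
    (nu₁ nu₂ : ℝ) (hnu₂ : 0 ≤ nu₂) (hnu : nu₂ < nu₁)
    (u₁ u₁' u₂ u₂' : ℝ → ℝ)
    (h₁ : IsStraightSol N a c ms u₁ u₁') (h₁a : u₁ a = 0) (h₁d : u₁' a = nu₁)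
    (h₂ : IsStraightSol N a c ms u₂ u₂') (h₂a : u₂ a = 0) (h₂d : u₂' a = nu₂) :
    (∀ x ∈ Ioc a c, u₂ x < u₁ x) ∧ (∀ x ∈ Icc a c, u₂' x < u₁' x) := by
  have key : ∀ i ≤ ms.n,
      (0 ≤ u₂ (ms.pt i) ∧ 0 ≤ u₂' (ms.pt i) ∧ u₂ (ms.pt i) ≤ u₁ (ms.pt i)) ∧
      ∀ x ∈ Icc a (ms.pt i), u₂' x < u₁' x ∧ (a < x → u₂ x < u₁ x) := by
    intro i
    induction i with
    | zero =>
      intro _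
      rw [hms0, h₁a, h₂a, h₂d]
      refine ⟨⟨le_rfl, hnu₂, le_rfl⟩, fun x hx => ?_⟩
      obtain rfl : x = a := le_antisymm hx.2 hx.1
      exact ⟨by rwa [h₁d, h₂d], fun h => absurd h (lt_irrefl _)⟩
    | succ i ih =>
      intro hi
      obtain ⟨⟨hv, hv', huv⟩, hprev⟩ := ih (by omega)
      have hai : a ≤ ms.pt i := hms0 ▸ ms.pt_le_pt (Nat.zero_le i) (by omega)
      have hic : ms.pt (i + 1) ≤ c := hmsn ▸ ms.pt_le_pt hi le_rfl
      have hlt : ms.pt i < ms.pt (i + 1) := ms.mono i hi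
      have hsub : Icc (ms.pt i) (ms.pt (i + 1)) ⊆ Icc a c := Icc_subset_Icc hai hic
      have hxi : ms.pt i ∈ Icc a b := ⟨hai, (hlt.le.trans hic).trans hc.2.le⟩
      have huv' : u₂' (ms.pt i) < u₁' (ms.pt i) := (hprev _ (right_mem_Icc.2 hai)).1
      have hcmp := linear_second_order_comparison
        (fun x hx => (h₁.1 x (hsub hx)).mono hsub) (h₁.2.2 i hi)
        (fun x hx => (h₂.1 x (hsub hx)).mono hsub) (h₂.2.2 i hi)
        (by unfold alphaC; fun_prop)
        (fun x hx => hH.alphaC_nonneg hxi hv' hv hx.1)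
        (fun x hx => hH.alphaC_mono hN hxi hv' huv'.le hv huv hx.1) hv hv' huv huv'
      obtain ⟨hw, hw', hwu, -, -⟩ := hcmp _ (right_mem_Icc.2 hlt.le)
      refine ⟨⟨hw, hw', hwu⟩, fun x hx => ?_⟩
      rcases le_or_gt x (ms.pt i) with hxl | hxl
      · exact hprev x ⟨hx.1, hxl⟩
      · obtain ⟨-, -, -, h', h⟩ := hcmp x ⟨hxl.le, hx.2⟩
        exact ⟨h', fun _ => h hxl⟩
  have hlast := (key ms.n le_rfl).2
  rw [hmsn] at hlast
  exact ⟨fun x hx => (hlast x ⟨hx.1.le, hx.2⟩).2 hx.1, fun x hx => (hlast x hx).1⟩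
end
end

section
/- Fix a straight mesh on [a,c]. For every fixed x ∈ [a,c], the maps ν ↦ ũ_ν(x) and ν ↦ ũ_ν'(x) are continuous functions of ν on [0,∞). -/
open Set Filter

noncomputable section

/-- Grönwall estimate for the difference `(w, w')` of two solutions of linear second-order
equations: `w'' = α w + g` with `|α| + 1 ≤ K` and `|g| ≤ ε`. -/
theorem norm_le_gronwallBound_of_second_order {s t K ε : ℝ} {w w' α g : ℝ → ℝ}
    (hw : ∀ x ∈ Icc s t, HasDerivWithinAt w (w' x) (Icc s t) x)
    (hw' : ∀ x ∈ Icc s t, HasDerivWithinAt w' (α x * w x + g x) (Icc s t) x)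
    (hα : ∀ x ∈ Icc s t, |α x| + 1 ≤ K) (hg : ∀ x ∈ Icc s t, |g x| ≤ ε) :
    ∀ x ∈ Icc s t, ‖(w x, w' x)‖ ≤ gronwallBound ‖(w s, w' s)‖ K ε (x - s) := by
  refine norm_le_gronwallBound_of_norm_deriv_right_le
    (f' := fun x => (w' x, α x * w x + g x)) ?_ ?_ le_rfl ?_
  · exact fun x hx => ((hw x hx).continuousWithinAt).prodMk (hw' x hx).continuousWithinAt
  · intro x hx
    have hx' := Ico_subset_Icc_self hx
    exact ((hw x hx').prodMk (hw' x hx')).mono_of_mem_nhdsWithin (Icc_mem_nhdsGE_of_mem hx)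
  · intro x hx
    have hx := Ico_subset_Icc_self hx
    have h1 : |w x| ≤ ‖(w x, w' x)‖ := norm_fst_le (w x, w' x)
    have h2 : |w' x| ≤ ‖(w x, w' x)‖ := norm_snd_le (w x, w' x)
    have hK := hα x hx
    have hgx := hg x hx
    have hα0 := abs_nonneg (α x)
    have hg0 := abs_nonneg (g x)
    have h0 := norm_nonneg (w x, w' x)
    refine norm_prod_le_iff.2 ⟨?_, ?_⟩
    · rw [Real.norm_eq_abs]
      nlinarith
    · calc ‖α x * w x + g x‖ ≤ |α x| * |w x| + |g x| := by
            rw [← abs_mul]; exact abs_add_le _ _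
        _ ≤ K * ‖(w x, w' x)‖ + ε := by
            gcongr <;> linarith

/-- Continuous dependence for linear second-order equations: if the initial data converge and the
coefficients converge uniformly, then the solutions and their derivatives converge pointwise. -/
theorem tendsto_of_second_order_linear {ι : Type*} {l : Filter ι} {s t C : ℝ} (hst : s ≤ t)
    {v v' α : ι → ℝ → ℝ} {v₀ v₀' α₀ : ℝ → ℝ} {η : ι → ℝ}
    (hv : ∀ᶠ i in l, ∀ x ∈ Icc s t, HasDerivWithinAt (v i) (v' i x) (Icc s t) x)
    (hv' : ∀ᶠ i in l, ∀ x ∈ Icc s t, HasDerivWithinAt (v' i) (α i x * v i x) (Icc s t) x)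
    (hv₀ : ∀ x ∈ Icc s t, HasDerivWithinAt v₀ (v₀' x) (Icc s t) x)
    (hv₀' : ∀ x ∈ Icc s t, HasDerivWithinAt v₀' (α₀ x * v₀ x) (Icc s t) x)
    (hC : ∀ x ∈ Icc s t, |α₀ x| ≤ C)
    (hη : Tendsto η l (nhds 0)) (hαη : ∀ᶠ i in l, ∀ x ∈ Icc s t, |α i x - α₀ x| ≤ η i)
    (hs : Tendsto (fun i => v i s) l (nhds (v₀ s)))
    (hs' : Tendsto (fun i => v' i s) l (nhds (v₀' s))) {x : ℝ} (hx : x ∈ Icc s t) :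
    Tendsto (fun i => v i x) l (nhds (v₀ x)) ∧ Tendsto (fun i => v' i x) l (nhds (v₀' x)) := by
  obtain ⟨M, hM⟩ := isCompact_Icc.exists_bound_of_continuousOn
    (fun y hy => (hv₀ y hy).continuousWithinAt)
  have hC0 : 0 ≤ C := (abs_nonneg _).trans (hC s (left_mem_Icc.2 hst))
  have hbound : ∀ᶠ i in l, ‖(v i x - v₀ x, v' i x - v₀' x)‖ ≤
      gronwallBound ‖(v i s - v₀ s, v' i s - v₀' s)‖ (C + 2) (η i * M) (x - s) := by
    filter_upwards [hv, hv', hαη, hη.eventually_le_const zero_lt_one] with i h1 h2 h3 h4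
    refine norm_le_gronwallBound_of_second_order (w := fun y => v i y - v₀ y)
      (w' := fun y => v' i y - v₀' y) (α := α i) (g := fun y => (α i y - α₀ y) * v₀ y)
      (fun y hy => (h1 y hy).sub (hv₀ y hy)) (fun y hy => ?_) (fun y hy => ?_) (fun y hy => ?_)
      x hx
    · exact ((h2 y hy).sub (hv₀' y hy)).congr_deriv (by ring)
    · have := abs_sub_abs_le_abs_sub (α i y) (α₀ y)
      linarith [h3 y hy, hC y hy]
    · rw [abs_mul]
      exact mul_le_mul (h3 y hy) (hM y hy) (abs_nonneg _) ((abs_nonneg _).trans (h3 y hy))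
  have hzero : Tendsto (fun i => gronwallBound ‖(v i s - v₀ s, v' i s - v₀' s)‖ (C + 2)
      (η i * M) (x - s)) l (nhds 0) := by
    have hδ : Tendsto (fun i => ‖(v i s - v₀ s, v' i s - v₀' s)‖) l (nhds 0) := by
      simpa using ((hs.sub_const (v₀ s)).prodMk_nhds (hs'.sub_const (v₀' s))).norm
    simp only [gronwallBound_of_K_ne_0 (show C + 2 ≠ 0 by positivity)]
    simpa using (hδ.mul_const (Real.exp ((C + 2) * (x - s)))).add
      (((hη.mul_const M).div_const (C + 2)).mul_const (Real.exp ((C + 2) * (x - s)) - 1))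
  have hprod := squeeze_zero_norm' hbound hzero
  rw [← Prod.mk_zero_zero, Prod.tendsto_iff] at hprod
  exact ⟨tendsto_sub_nhds_zero_iff.1 hprod.1, tendsto_sub_nhds_zero_iff.1 hprod.2⟩

theorem continuous_pd1_left {N : ℝ → ℝ → ℝ} (hN : ContDiff ℝ 1 (Function.uncurry N)) (x : ℝ) :
    Continuous fun u => pd1 N u x := by
  have h : (fun u => pd1 N u x) = fun u => fderiv ℝ (Function.uncurry N) (u, x) (1, 0) := by
    funext u
    exact ((hN.differentiable one_ne_zero (u, x)).hasFDerivAt.comp_hasDerivAt u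
      ((hasDerivAt_id u).prodMk (hasDerivAt_const u x))).deriv
  rw [h]
  have := hN.continuous_fderiv one_ne_zero
  fun_prop

theorem continuous_pd2_left {N : ℝ → ℝ → ℝ} (hN : ContDiff ℝ 1 (Function.uncurry N)) (x : ℝ) :
    Continuous fun u => pd2 N u x := by
  have h : (fun u => pd2 N u x) = fun u => fderiv ℝ (Function.uncurry N) (u, x) (0, 1) := by
    funext u
    exact ((hN.differentiable one_ne_zero (u, x)).hasFDerivAt.comp_hasDerivAt x
      ((hasDerivAt_const x u).prodMk (hasDerivAt_id x))).deriv
  rw [h]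
  have := hN.continuous_fderiv one_ne_zero
  fun_prop

/-- Propagation of continuity in the parameter across one mesh subinterval. -/
theorem continuousOn_slope_of_subinterval {N : ℝ → ℝ → ℝ}
    (hN : ContDiff ℝ 1 (Function.uncurry N)) {s t : ℝ} (hst : s ≤ t) {S : Set ℝ}
    {U U' : ℝ → ℝ → ℝ}
    (hU : ∀ ν ∈ S, ∀ x ∈ Icc s t, HasDerivWithinAt (U ν) (U' ν x) (Icc s t) x)
    (hU' : ∀ ν ∈ S, ∀ x ∈ Icc s t,
      HasDerivWithinAt (U' ν) (alphaC N s (U' ν s) (U ν s) x * U ν x) (Icc s t) x)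
    (hs : ContinuousOn (fun ν => U ν s) S) (hs' : ContinuousOn (fun ν => U' ν s) S)
    {x : ℝ} (hx : x ∈ Icc s t) :
    ContinuousOn (fun ν => U ν x) S ∧ ContinuousOn (fun ν => U' ν x) S := by
  set A : ℝ → ℝ := fun ν => pd1 N (U ν s) s * U' ν s + pd2 N (U ν s) s with hA
  set B : ℝ → ℝ := fun ν => N (U ν s) s with hB
  have hAc : ContinuousOn A S :=
    (((continuous_pd1_left hN s).comp_continuousOn hs).mul hs').add
      ((continuous_pd2_left hN s).comp_continuousOn hs)
  have hBc : ContinuousOn B S :=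
    hN.continuous.comp_continuousOn (hs.prodMk continuousOn_const)
  have key : ∀ ν₀ ∈ S, Tendsto (fun ν => U ν x) (nhdsWithin ν₀ S) (nhds (U ν₀ x)) ∧
      Tendsto (fun ν => U' ν x) (nhdsWithin ν₀ S) (nhds (U' ν₀ x)) := by
    intro ν₀ hν₀
    have hdist : ∀ y ∈ Icc s t, |y - s| ≤ t - s := fun y hy => by
      rw [abs_of_nonneg (by linarith [hy.1])]; linarith [hy.2]
    have hlin : ∀ p q : ℝ, ∀ y ∈ Icc s t, |p * (y - s) + q| ≤ |p| * (t - s) + |q| := by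
      intro p q y hy
      refine (abs_add_le _ _).trans ?_
      rw [abs_mul]
      gcongr
      exact hdist y hy
    refine tendsto_of_second_order_linear hst
      (α := fun ν y => alphaC N s (U' ν s) (U ν s) y)
      (η := fun ν => |A ν - A ν₀| * (t - s) + |B ν - B ν₀|)
      (eventually_mem_nhdsWithin.mono fun ν hν => hU ν hν)
      (eventually_mem_nhdsWithin.mono fun ν hν => hU' ν hν)
      (hU ν₀ hν₀) (hU' ν₀ hν₀) (hlin (A ν₀) (B ν₀)) ?_ (.of_forall fun ν y hy => ?_)
      (hs ν₀ hν₀) (hs' ν₀ hν₀) hx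
    · simpa using ((((hAc ν₀ hν₀).tendsto.sub_const (A ν₀)).abs.mul_const (t - s)).add
        ((hBc ν₀ hν₀).tendsto.sub_const (B ν₀)).abs)
    · convert hlin (A ν - A ν₀) (B ν - B ν₀) y hy using 2
      simp only [alphaC, hA, hB]
      ring
  exact ⟨fun ν hν => (key ν hν).1, fun ν hν => (key ν hν).2⟩

/-- the straight scheme solution `ũ_ν` and its derivative `ũ_ν'` depend
continuously on the initial slope `ν ∈ [0,∞)`, at every fixed point `x ∈ [a,c]`. -/
theorem straight_scheme_continuous_in_slope
    (a b c ub : ℝ) (hab : a < b) (hub : 0 < ub) (hc : c ∈ Ioo a b)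
    (N : ℝ → ℝ → ℝ) (hN : ContDiff ℝ 2 (Function.uncurry N))
    (ms : Mesh) (hms0 : ms.pt 0 = a) (hmsn : ms.pt ms.n = c)
    (U U' : ℝ → ℝ → ℝ)
    (hU : ∀ ν : ℝ, 0 ≤ ν →
      IsStraightSol N a c ms (U ν) (U' ν) ∧ U ν a = 0 ∧ U' ν a = ν) :
    ∀ x ∈ Icc a c,
      ContinuousOn (fun ν => U ν x) (Ici 0) ∧
      ContinuousOn (fun ν => U' ν x) (Ici 0) := by
  have key : ∀ i ≤ ms.n, ∀ x ∈ Icc a (ms.pt i),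
      ContinuousOn (fun ν => U ν x) (Ici 0) ∧ ContinuousOn (fun ν => U' ν x) (Ici 0) := by
    intro i
    induction i with
    | zero =>
      intro _ x hx
      obtain rfl : x = a := le_antisymm (hms0 ▸ hx.2) hx.1
      exact ⟨continuousOn_const.congr fun ν hν => (hU ν hν).2.1,
        continuousOn_id.congr fun ν hν => (hU ν hν).2.2⟩
    | succ i ih =>
      intro hi x hx
      have hai : a ≤ ms.pt i := hms0 ▸ ms.pt_le_pt (Nat.zero_le i) (by omega)
      have hic : ms.pt (i + 1) ≤ c := hmsn ▸ ms.pt_le_pt hi le_rfl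
      rcases le_total x (ms.pt i) with hxi | hxi
      · exact ih (by omega) x ⟨hx.1, hxi⟩
      · obtain ⟨hs, hs'⟩ := ih (by omega) (ms.pt i) (right_mem_Icc.2 hai)
        have hsub : Icc (ms.pt i) (ms.pt (i + 1)) ⊆ Icc a c := Icc_subset_Icc hai hic
        exact continuousOn_slope_of_subinterval (hN.of_le one_le_two) (ms.mono i hi).le
          (fun ν hν y hy => ((hU ν hν).1.1 y (hsub hy)).mono hsub)
          (fun ν hν y hy => (hU ν hν).1.2.2 i hi y hy) hs hs' ⟨hxi, hx.2⟩
  exact fun x hx => key ms.n le_rfl x (hmsn.symm ▸ hx)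
end
end

section
/- Let (ũ, x̃) be a scheme pair. Then x̃'(v) ≠ 0 for every v ∈ [ũ(c), u_b]; consequently x̃ is a strictly increasing bijection from [ũ(c), u_b] onto [c, b], and its inverse function x̃⁻¹ : [c,b] → [ũ(c), u_b] exists and is continuously differentiable on [c,b]. -/
open Set Filter

noncomputable section

/-- A solution of the linear equation `f' = g f` on `[p, q]` with `g` continuous that is nonzero
at `p` has no zero on `[p, q]`. -/
theorem ne_zero_of_hasDerivWithinAt_mul {f g : ℝ → ℝ} {p q : ℝ}
    (hg : ContinuousOn g (Icc p q))
    (hf : ∀ x ∈ Icc p q, HasDerivWithinAt f (g x * f x) (Icc p q) x) (hp : f p ≠ 0) :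
    ∀ x ∈ Icc p q, f x ≠ 0 := by
  intro x hx hfx
  obtain ⟨K, hK⟩ := isCompact_Icc.exists_bound_of_continuousOn hg
  have hsub : Icc p x ⊆ Icc p q := Icc_subset_Icc_right hx.2
  have h : EqOn f (fun _ => (0 : ℝ)) (Icc p x) := by
    refine ODE_solution_unique_of_mem_Icc_left (v := fun t y => g t * y) (s := fun _ => univ)
      (K := K.toNNReal) ?_ ?_ ?_ (fun _ _ => mem_univ _) continuousOn_const ?_
      (fun _ _ => mem_univ _) hfx
    · intro t ht
      refine LipschitzOnWith.of_dist_le_mul fun y _ z _ => ?_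
      rw [Real.dist_eq, Real.dist_eq, ← mul_sub, abs_mul]
      exact mul_le_mul_of_nonneg_right
        ((hK t (hsub (Ioc_subset_Icc_self ht))).trans (Real.le_coe_toNNReal K)) (abs_nonneg _)
    · exact fun t ht => ((hf t (hsub ht)).mono hsub).continuousWithinAt
    · intro t ht
      exact (hf t (hsub (Ioc_subset_Icc_self ht))).mono_of_mem_nhdsWithin
        (mem_of_superset (Icc_mem_nhdsLE ht.1) (Icc_subset_Icc_right (ht.2.trans hx.2)))
    · intro t _
      simpa using hasDerivWithinAt_const t (Iic t) (0 : ℝ)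
  exact hp (h (left_mem_Icc.2 hx.1))

theorem continuous_betaC (N : ℝ → ℝ → ℝ) (ui p q : ℝ) : Continuous (betaC N ui p q) := by
  unfold betaC
  fun_prop

/-- The derivative of an inverse scheme solution that is nonzero at the left endpoint never
vanishes. -/
theorem IsInvSol.deriv_ne_zero {N : ℝ → ℝ → ℝ} {ub s : ℝ} {m : Mesh} {X X' : ℝ → ℝ}
    (h : IsInvSol N ub m s X X') (h0 : m.pt 0 ≤ s) (hn : m.pt m.n = ub) (hs : X' s ≠ 0) :
    ∀ v ∈ Icc s ub, X' v ≠ 0 := by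
  have key : ∀ i ≤ m.n, ∀ v ∈ Icc s (ubar m s i), X' v ≠ 0 := by
    intro i
    induction i with
    | zero =>
      intro _ v hv
      rw [ubar, max_eq_right h0, Icc_self, mem_singleton_iff] at hv
      rwa [hv]
    | succ i ih =>
      intro hi v hv
      have ih := ih (Nat.le_of_succ_le hi)
      rcases le_total v (ubar m s i) with hvi | hvi
      · exact ih v ⟨hv.1, hvi⟩
      have hX := h.2.2 i hi
      have hcont : ContinuousOn X' (Icc (ubar m s i) (ubar m s (i + 1))) :=
        fun w hw => (hX w hw).continuousWithinAt
      refine ne_zero_of_hasDerivWithinAt_mul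
        (g := fun w => betaC N (ubar m s i) (X' (ubar m s i)) (X (ubar m s i)) w * X' w ^ 2)
        ((continuous_betaC ..).continuousOn.mul (hcont.pow 2)) (fun w hw => ?_)
        (ih (ubar m s i) ⟨le_max_right _ _, le_rfl⟩) v ⟨hvi, hv.2⟩
      convert hX w hw using 1
      ring
  intro v hv
  refine key m.n le_rfl v ⟨hv.1, hv.2.trans ?_⟩
  rw [ubar, hn]
  exact le_max_left _ _

/-- A differentiable function on `[s, t]` with continuous nonvanishing derivative and
`X s < X t` has positive derivative. -/
theorem deriv_pos_of_ne_zero_of_lt_s11 {X X' : ℝ → ℝ} {s t : ℝ} (hst : s < t)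
    (hX : ∀ v ∈ Icc s t, HasDerivWithinAt X (X' v) (Icc s t) v)
    (hX' : ContinuousOn X' (Icc s t)) (hne : ∀ v ∈ Icc s t, X' v ≠ 0) (hlt : X s < X t) :
    ∀ v ∈ Icc s t, 0 < X' v := by
  obtain ⟨w, hw, hwX⟩ := exists_hasDerivAt_eq_slope X X' hst
    (fun v hv => (hX v hv).continuousWithinAt)
    (fun v hv => (hX v (Ioo_subset_Icc_self hv)).hasDerivAt (Icc_mem_nhds hv.1 hv.2))
  have hwpos : 0 < X' w := hwX ▸ div_pos (sub_pos.2 hlt) (sub_pos.2 hst)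
  intro v hv
  by_contra! hle
  obtain ⟨z, hz, hz0⟩ := isPreconnected_Icc.intermediate_value hv (Ioo_subset_Icc_self hw) hX'
    ⟨hle, hwpos.le⟩
  exact hne z hz hz0

theorem strictMonoOn_Icc_of_hasDerivWithinAt_pos {X X' : ℝ → ℝ} {s t : ℝ}
    (hX : ∀ v ∈ Icc s t, HasDerivWithinAt X (X' v) (Icc s t) v)
    (hpos : ∀ v ∈ Icc s t, 0 < X' v) : StrictMonoOn X (Icc s t) := by
  refine strictMonoOn_of_deriv_pos (convex_Icc s t) (fun v hv => (hX v hv).continuousWithinAt)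
    fun v hv => ?_
  rw [interior_Icc] at hv
  rw [((hX v (Ioo_subset_Icc_self hv)).hasDerivAt (Icc_mem_nhds hv.1 hv.2)).deriv]
  exact hpos v (Ioo_subset_Icc_self hv)

/-- A left inverse on a compact set `K` of a function `f` continuous on `K` is continuous on the
image of `K` under `f`. -/
theorem IsCompact.continuousOn_leftInvOn {f g : ℝ → ℝ} {K : Set ℝ} (hK : IsCompact K)
    (hf : ContinuousOn f K) (hg : LeftInvOn g f K) : ContinuousOn g (f '' K) := by
  refine continuousOn_iff_isClosed.2 fun t ht => ⟨f '' (K ∩ t), ?_, ?_⟩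
  · exact ((hK.inter_right ht).image_of_continuousOn (hf.mono inter_subset_left)).isClosed
  · ext w
    constructor
    · rintro ⟨hw, v, hv, rfl⟩
      rw [mem_preimage, hg hv] at hw
      exact ⟨⟨v, ⟨hv, hw⟩, rfl⟩, v, hv, rfl⟩
    · rintro ⟨⟨v, ⟨hv, hvt⟩, rfl⟩, hw⟩
      exact ⟨by rwa [mem_preimage, hg hv], hw⟩

/-- for a scheme pair `(ũ, x̃)`, the derivative `x̃'` never vanishes on
`[ũ(c), u_b]`; consequently `x̃` is a strictly increasing bijection from `[ũ(c), u_b]`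
onto `[c,b]` whose inverse is continuously differentiable on `[c,b]`. -/
theorem scheme_pair_inverse_exists
    (a b c ub : ℝ) (hab : a < b) (hub : 0 < ub) (hc : c ∈ Ioo a b)
    (N : ℝ → ℝ → ℝ) (hN : ContDiff ℝ 2 (Function.uncurry N))
    (ms mi : Mesh) (hms0 : ms.pt 0 = a) (hmsn : ms.pt ms.n = c)
    (hmi0 : mi.pt 0 = 0) (hmin : mi.pt mi.n = ub)
    (u u' X X' : ℝ → ℝ)
    (hp : IsSchemePair N a b c ub ms mi u u' X X') :
    (∀ v ∈ Icc (u c) ub, X' v ≠ 0) ∧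
    StrictMonoOn X (Icc (u c) ub) ∧
    X '' Icc (u c) ub = Icc c b ∧
    ∃ Y Y' : ℝ → ℝ,
      (∀ v ∈ Icc (u c) ub, Y (X v) = v) ∧
      (∀ w ∈ Icc c b, X (Y w) = w) ∧
      (∀ w ∈ Icc c b, HasDerivWithinAt Y (Y' w) (Icc c b) w) ∧
      ContinuousOn Y' (Icc c b) := by
  obtain ⟨-, -, hs0, hsub, hu', hinv, hXb, hXc, hX'c⟩ := hp
  have hne : ∀ v ∈ Icc (u c) ub, X' v ≠ 0 :=
    hinv.deriv_ne_zero (hmi0.trans_le hs0.le) hmin (by rw [hX'c]; exact one_div_ne_zero hu')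
  obtain ⟨hX, hX', -⟩ := hinv
  have hpos := deriv_pos_of_ne_zero_of_lt_s11 hsub hX hX' hne (by rw [hXb, hXc]; exact hc.2)
  have hmono := strictMonoOn_Icc_of_hasDerivWithinAt_pos hX hpos
  have hcont : ContinuousOn X (Icc (u c) ub) := fun v hv => (hX v hv).continuousWithinAt
  have himg : X '' Icc (u c) ub = Icc c b := by
    rw [hcont.image_Icc_of_monotoneOn hsub.le hmono.monotoneOn, hXb, hXc]
  set Y := Function.invFunOn X (Icc (u c) ub)
  have hYX : LeftInvOn Y X (Icc (u c) ub) := hmono.injOn.leftInvOn_invFunOn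
  have hXY : ∀ w ∈ Icc c b, X (Y w) = w := fun w hw => Function.invFunOn_eq (himg.superset hw)
  have hmaps : MapsTo Y (Icc c b) (Icc (u c) ub) :=
    fun w hw => Function.invFunOn_mem (himg.superset hw)
  have hYc : ContinuousOn Y (Icc c b) := himg ▸ isCompact_Icc.continuousOn_leftInvOn hcont hYX
  refine ⟨hne, hmono, himg, Y, fun w => (X' (Y w))⁻¹, hYX, hXY, fun w hw => ?_, ?_⟩
  · exact HasFDerivWithinAt.of_local_left_inverse
      (f' := ContinuousLinearEquiv.unitsEquivAut ℝ (Units.mk0 _ (hne _ (hmaps hw))))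
      ((hYc w hw).tendsto_nhdsWithin hmaps) (hX _ (hmaps hw)) hw
      (eventually_mem_nhdsWithin.mono hXY)
  · exact (hX'.comp hYc hmaps).inv₀ fun w hw => hne _ (hmaps hw)
end
end
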